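/- arXiv:2312.05478 — 2 statements merged into one kernel-verified Lean document; each statement's English description precedes it below -/
import Mathlib

section
/- Let λ be a partition of r with conjugate μ = λ', and let k_1,…,k_{λ_1−1} be positive integers with k_c ≤ μ_{c+1} for all c = 1,…,λ_1−1. If Σ_{t=1}^{j} (−1)^{t−1} C(μ_{c+1}−t, μ_{c+1}−k_c) C(j,t) C(μ_c−μ_{c+1}+j+t, t) ≠ 0 for all c = 1,…,λ_1−1 and all j = 1,…,μ_{c+1}, then M^λ / SGR^λ(k_1,…,k_{λ_1−1}) ≅ S^λ as 𝔖_r-modules; equivalently, SGR^λ(k_1,…,k_{λ_1−1}) = G^λ as subspaces of M^λ. -/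
set_option synthInstance.maxHeartbeats 1000000
set_option maxSynthPendingDepth 3
set_option maxHeartbeats 1000000

noncomputable section

namespace Specht

variable (K : Type) [Field K] [CharZero K]
variable {L : ℕ} (μ : Fin L → ℕ) (r : ℕ)

/-- The cells of the Young diagram of `λ`, where `μ = λ'` records the column lengths:
`⟨c, j⟩` is the cell in column `c` and row `j` (`0`-indexed). -/
abbrev Cell : Type := Σ c : Fin L, Fin (μ c)

/-- Young tableaux of shape `λ`: bijective fillings of the diagram of `λ` by `{1, …, r}`. -/
abbrev Tab : Type := Cell μ ≃ Fin r

/-- The free vector space on the set of Young tableaux of shape `λ`. -/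
abbrev FreeTab : Type := Tab μ r →₀ K

/-- The relations `T + S = 0`, for `S` obtained from `T` by a transposition of two entries
in the same column. -/
def colRel : Submodule K (FreeTab K μ r) :=
  Submodule.span K
    {x | ∃ (T : Tab μ r) (c : Fin L) (j₁ j₂ : Fin (μ c)), j₁ ≠ j₂ ∧
      x = Finsupp.single T 1 +
        Finsupp.single ((Equiv.swap (⟨c, j₁⟩ : Cell μ) ⟨c, j₂⟩).trans T) 1}

/-- The module `M^λ` spanned by column tabloids. -/
abbrev MLam : Type := FreeTab K μ r ⧸ colRel K μ r

/-- The column tabloid of a tableau. -/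
def tabloid (T : Tab μ r) : MLam K μ r :=
  Submodule.Quotient.mk (Finsupp.single T 1)

/-- `ρ` is the action of the symmetric group `𝔖_r` on `M^λ` by relabelling entries. -/
def IsTabAction (ρ : Equiv.Perm (Fin r) → (MLam K μ r →ₗ[K] MLam K μ r)) : Prop :=
  ∀ (σ : Equiv.Perm (Fin r)) (T : Tab μ r), ρ σ (tabloid K μ r T) = tabloid K μ r (T.trans σ)

/-- The permutation of the cells exchanging the top `k` cells of column `c+1` with
the `k` cells of column `c` recorded by `A`, in increasing row order. -/
def exchPerm (c : ℕ) (hc : c + 1 < L) (k : ℕ) (hk : k ≤ μ ⟨c+1, hc⟩)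
    (A : Finset (Fin (μ ⟨c, by omega⟩))) (hA : A.card = k) : Equiv.Perm (Cell μ) :=
  (List.ofFn (fun i : Fin k =>
    Equiv.swap (⟨⟨c, by omega⟩, ((A.orderIsoOfFin hA i : A) : Fin (μ ⟨c, by omega⟩))⟩ : Cell μ)
      ⟨⟨c+1, hc⟩, ⟨i.val, by omega⟩⟩)).prod

/-- The Garnir element `g^T_{c,k} = T̄ - Σ S̄ ∈ M^λ`, the sum being over all tableaux `S`
obtained from `T` by exchanging the top `k` entries of column `c+1` with `k` entries of
column `c`, maintaining the vertical order of each exchanged set. -/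
def garnirElt (T : Tab μ r) (c : ℕ) (hc : c + 1 < L) (k : ℕ) (hk : k ≤ μ ⟨c+1, hc⟩) :
    MLam K μ r :=
  tabloid K μ r T -
    ∑ A ∈ (Finset.powersetCard k (Finset.univ : Finset (Fin (μ ⟨c, by omega⟩)))).attach,
      tabloid K μ r
        ((exchPerm μ c hc k hk A.1 (Finset.mem_powersetCard.mp A.2).2).trans T)

/-- The permutation of the cells exchanging the `k` cells of column `c+1` recorded by `B`
with the `k` cells of column `c` recorded by `A`, in increasing row order. -/
def exch2Perm (c : ℕ) (hc : c + 1 < L)  (k : ℕ)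
    (A : Finset (Fin (μ ⟨c, by omega⟩))) (hA : A.card = k)
    (B : Finset (Fin (μ ⟨c+1, hc⟩))) (hB : B.card = k) : Equiv.Perm (Cell μ) :=
  (List.ofFn (fun i : Fin k =>
    Equiv.swap (⟨⟨c, by omega⟩, ((A.orderIsoOfFin hA i : A) : Fin (μ ⟨c, by omega⟩))⟩ : Cell μ)
      ⟨⟨c+1, hc⟩, ((B.orderIsoOfFin hB i : B) : Fin (μ ⟨c+1, hc⟩))⟩)).prod

/-- The symmetrized Garnir element `r^T_{c,k} = C(μ_{c+1},k)·T̄ - Σ S̄ ∈ M^λ`, the sum being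
over all tableaux `S` obtained from `T` by exchanging any `k` entries of column `c+1` with
any `k` entries of column `c`, maintaining the vertical order of each exchanged set. -/
def sgrElt (T : Tab μ r) (c : ℕ) (hc : c + 1 < L) (k : ℕ) : MLam K μ r :=
  ((μ ⟨c+1, hc⟩).choose k : K) • tabloid K μ r T -
    ∑ A ∈ (Finset.powersetCard k (Finset.univ : Finset (Fin (μ ⟨c, by omega⟩)))).attach,
      ∑ B ∈ (Finset.powersetCard k (Finset.univ : Finset (Fin (μ ⟨c+1, hc⟩)))).attach,
        tabloid K μ r
          ((exch2Perm μ c hc k A.1 (Finset.mem_powersetCard.mp A.2).2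
              B.1 (Finset.mem_powersetCard.mp B.2).2).trans T)

/-- The subspace `G^λ ⊆ M^λ` spanned by all Garnir relations. -/
def garnirSub : Submodule K (MLam K μ r) :=
  Submodule.span K
    {x | ∃ (T : Tab μ r) (c : ℕ) (hc : c + 1 < L) (k : ℕ) (hk : k ≤ μ ⟨c+1, hc⟩),
      x = garnirElt K μ r T c hc k hk}

/-- The subspace `GR^λ(k_1, …, k_{λ_1 - 1}) ⊆ M^λ` spanned by the Garnir relations
`g^T_{c,k_c}`. -/
def grSub (kk : ℕ → ℕ) : Submodule K (MLam K μ r) :=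
  Submodule.span K
    {x | ∃ (T : Tab μ r) (c : ℕ) (hc : c + 1 < L) (hk : kk c ≤ μ ⟨c+1, hc⟩),
      x = garnirElt K μ r T c hc (kk c) hk}

/-- The subspace `SGR^λ(k_1, …, k_{λ_1 - 1}) ⊆ M^λ` spanned by the symmetrized Garnir
relations `r^T_{c,k_c}`. -/
def sgrSub (kk : ℕ → ℕ) : Submodule K (MLam K μ r) :=
  Submodule.span K
    {x | ∃ (T : Tab μ r) (c : ℕ) (hc : c + 1 < L), x = sgrElt K μ r T c hc (kk c)}

/-- Quotients `M₁ ⧸ N₁` and `M₂ ⧸ N₂` are isomorphic compatibly with the given actions. -/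
def IsQuotIso {G' : Type} {M₁ M₂ : Type} [AddCommGroup M₁] [Module K M₁]
    [AddCommGroup M₂] [Module K M₂]
    (N₁ : Submodule K M₁) (N₂ : Submodule K M₂)
    (ρ₁ : G' → M₁ →ₗ[K] M₁) (ρ₂ : G' → M₂ →ₗ[K] M₂) : Prop :=
  ∃ e : (M₁ ⧸ N₁) ≃ₗ[K] (M₂ ⧸ N₂),
    ∀ (g : G') (x : M₁) (y : M₂),
      e (Submodule.Quotient.mk x) = Submodule.Quotient.mk y →
      e (Submodule.Quotient.mk (ρ₁ g x)) = Submodule.Quotient.mk (ρ₂ g y)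

end Specht

/-! Fix two adjacent columns, of lengths `m ≥ n`. Up to sign, the tabloids obtained from a given one
by permuting the `m + n` cells of these columns are a function `θ` of the `n`-element set of cells
whose entries go to the right-hand column. A Garnir relation then says that the sum of `θ` over the
sets `T` with `T ∩ S = R` equals `(-1) ^ (#R + n) • θ S`, where `R ⊆ S` and `#S = n`, and a
symmetrized Garnir relation is the sum of these over all `R` of a given size.

In terms of the superset sums `∑ T ⊇ R, θ T`, Möbius inversion reduces every Garnir relation to the
vanishing of the superset sums with `#R < n`, and turns the symmetrized relation into a vanishing
combination `∑ t, a t • q t`, where `q t` sums the superset sums over the `(n - t)`-element subsets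
of `S`. This vanishing is obtained by strong induction on `R`: once the superset sums vanish on the
proper subsets of `R`, summing the combination over all `S ⊇ R` multiplies the superset sum at `R`
by the coefficient assumed to be nonzero, for `j = n - #R`.
-/

namespace Specht

open Finset
open scoped Pointwise

section SubsetSums

theorem sum_Icc_neg_one_pow_card {α : Type*} [DecidableEq α] {R S : Finset α} (h : R ⊆ S) :
    ∑ R' ∈ Icc R S, (-1 : ℤ) ^ (#R + #R') = if S = R then 1 else 0 := by
  have hdisj : ∀ C ∈ (S \ R).powerset, Disjoint R C := fun C hC =>
    disjoint_sdiff.mono_right (mem_powerset.1 hC)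
  have hinj : Set.InjOn (R ∪ ·) ((S \ R).powerset : Set (Finset α)) := fun C hC D hD hCD => by
    rw [← union_sdiff_cancel_left (hdisj C hC), ← union_sdiff_cancel_left (hdisj D hD)]
    exact congrArg (· \ R) hCD
  calc ∑ R' ∈ Icc R S, (-1 : ℤ) ^ (#R + #R')
      = ∑ C ∈ (S \ R).powerset, (-1 : ℤ) ^ #C := by
        rw [Icc_eq_image_powerset h, sum_image hinj]
        refine sum_congr rfl fun C hC => ?_
        rw [card_union_of_disjoint (hdisj C hC), ← add_assoc, pow_add, Even.neg_one_pow ⟨#R, rfl⟩,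
          one_mul]
    _ = if S = R then 1 else 0 := by
        simp only [sum_powerset_neg_one_pow_card, sdiff_eq_empty_iff_subset]
        simp only [subset_antisymm_iff, h, and_true]

theorem sum_powersetCard_sdiff {α M : Type*} [DecidableEq α] [AddCommMonoid M] {S : Finset α}
    {k : ℕ} (hk : k ≤ #S) (f : Finset α → M) :
    ∑ B ∈ powersetCard k S, f (S \ B) = ∑ R ∈ powersetCard (#S - k) S, f R := by
  refine sum_nbij' (S \ ·) (S \ ·) ?_ ?_ ?_ ?_ fun _ _ => rfl
  · intro B hB
    rw [mem_powersetCard] at hB ⊢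
    exact ⟨sdiff_subset, by rw [card_sdiff_of_subset hB.1, hB.2]⟩
  · intro R hR
    rw [mem_powersetCard] at hR ⊢
    exact ⟨sdiff_subset, by rw [card_sdiff_of_subset hR.1, hR.2, Nat.sub_sub_self hk]⟩
  · exact fun B hB => Finset.sdiff_sdiff_eq_self (mem_powersetCard.1 hB).1
  · exact fun R hR => Finset.sdiff_sdiff_eq_self (mem_powersetCard.1 hR).1

theorem add_card_choose_eq_sum_powerset {α : Type*} (M k : ℕ) (Y : Finset α) (hY : #Y ≤ k) :
    (M + #Y).choose k = ∑ X ∈ Y.powerset, M.choose (k - #X) := by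
  rw [sum_powerset_apply_card (fun i => M.choose (k - i)), add_comm M, Nat.add_choose_eq,
    Nat.sum_antidiagonal_eq_sum_range_succ fun i j => (#Y).choose i * M.choose j]
  refine (sum_subset (range_subset_range.2 (by omega)) fun i _ hi => ?_).symm
  rw [Nat.choose_eq_zero_of_lt (by simpa using hi), zero_mul]

variable {α Q : Type*} [Fintype α] [DecidableEq α] [AddCommGroup Q]

/-- The sum of `θ` over the `n`-element sets containing `R`. -/
def supersetSum (n : ℕ) (θ : Finset α → Q) (R : Finset α) : Q :=
  ∑ T ∈ powersetCard n univ with R ⊆ T, θ T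

/-- The sum of `θ` over the `n`-element sets whose trace on `S` is `R`. With `#S = n`, these are the
sets obtained from `S` by exchanging `S \ R` with as many elements outside `S`. -/
def traceSum (n : ℕ) (θ : Finset α → Q) (S R : Finset α) : Q :=
  ∑ T ∈ powersetCard n univ with T ∩ S = R, θ T

variable {n : ℕ} {θ : Finset α → Q}

theorem supersetSum_of_card_eq {S : Finset α} (hS : #S = n) : supersetSum n θ S = θ S := by
  have h : {T ∈ powersetCard n (univ : Finset α) | S ⊆ T} = {S} := by
    ext T
    simp only [mem_filter, mem_powersetCard_univ, mem_singleton]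
    refine ⟨fun ⟨hT, hST⟩ => (eq_of_subset_of_card_le hST (hT.trans hS.symm).le).symm, ?_⟩
    rintro rfl
    exact ⟨hS, Subset.rfl⟩
  rw [supersetSum, h, sum_singleton]

theorem traceSum_eq_sum_supersetSum {S R : Finset α} (h : R ⊆ S) :
    traceSum n θ S R = ∑ R' ∈ Icc R S, (-1 : ℤ) ^ (#R + #R') • supersetSum n θ R' := by
  have hsum (T : Finset α) : ∑ R' ∈ Icc R S with R' ⊆ T, (-1 : ℤ) ^ (#R + #R') =
      if T ∩ S = R then 1 else 0 := by
    by_cases hRT : R ⊆ T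
    · rw [← sum_Icc_neg_one_pow_card (subset_inter hRT h)]
      refine sum_congr (ext fun R' => ?_) fun _ _ => rfl
      simp only [mem_filter, mem_Icc, subset_inter_iff]
      tauto
    · rw [if_neg fun hTS : T ∩ S = R => hRT (hTS ▸ inter_subset_left), sum_filter]
      refine sum_eq_zero fun R' hR' => if_neg fun hR'T => hRT ((mem_Icc.1 hR').1.trans hR'T)
  calc traceSum n θ S R
      = ∑ T ∈ powersetCard n univ,
          (∑ R' ∈ Icc R S with R' ⊆ T, (-1 : ℤ) ^ (#R + #R')) • θ T := by
        simp only [hsum, ite_smul, one_smul, zero_smul, traceSum, sum_filter]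
    _ = ∑ R' ∈ Icc R S, (-1 : ℤ) ^ (#R + #R') • supersetSum n θ R' := by
        simp only [supersetSum, sum_smul, smul_sum]
        exact sum_comm' (by simp only [mem_filter]; tauto)

theorem sum_traceSum {S : Finset α} {m : ℕ} (hS : #S = n) :
    ∑ R ∈ powersetCard m S, traceSum n θ S R =
      ∑ i ∈ range (n + 1), ((-1 : ℤ) ^ (m + i) * i.choose m) •
        ∑ R ∈ powersetCard i S, supersetSum n θ R := by
  calc ∑ R ∈ powersetCard m S, traceSum n θ S R
      = ∑ R ∈ powersetCard m S, ∑ R' ∈ Icc R S, (-1 : ℤ) ^ (m + #R') • supersetSum n θ R' := by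
        refine sum_congr rfl fun R hR => ?_
        rw [mem_powersetCard] at hR
        rw [traceSum_eq_sum_supersetSum hR.1, hR.2]
    _ = ∑ R' ∈ S.powerset, ∑ _R ∈ powersetCard m R', (-1 : ℤ) ^ (m + #R') • supersetSum n θ R' := by
        refine sum_comm' fun _ _ => ?_
        simp only [mem_powersetCard, mem_Icc, mem_powerset]
        exact ⟨fun h => ⟨⟨h.2.1, h.1.2⟩, h.2.2⟩, fun h => ⟨⟨h.1.1.trans h.2, h.1.2⟩, h.1.1, h.2⟩⟩
    _ = ∑ R' ∈ S.powerset, ((-1 : ℤ) ^ (m + #R') * (#R').choose m) • supersetSum n θ R' := by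
        refine sum_congr rfl fun R' _ => ?_
        rw [sum_const, card_powersetCard, ← natCast_zsmul, smul_smul, mul_comm]
    _ = _ := by
        rw [sum_powerset, hS]
        refine sum_congr rfl fun i _ => ?_
        rw [smul_sum]
        exact sum_congr rfl fun R hR => by rw [(mem_powersetCard.1 hR).2]

theorem supersetSum_supersetSum {m : ℕ} (hmn : m ≤ n) (X : Finset α) :
    supersetSum m (supersetSum n θ) X = (n - #X).choose (n - m) • supersetSum n θ X := by
  have hcard (T : Finset α) (hT : #T = n) (hXT : X ⊆ T) :
      #{R ∈ powersetCard m univ | X ⊆ R ∧ R ⊆ T} = (n - #X).choose (n - m) := by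
    have hset : {R ∈ powersetCard m (univ : Finset α) | X ⊆ R ∧ R ⊆ T} =
        {R ∈ powersetCard m T | X ⊆ R} := by
      ext R
      simp only [mem_filter, mem_powersetCard, subset_univ]
      tauto
    rw [hset]
    by_cases hX : #X ≤ m
    · rw [card_filter_powersetCard_subset _ _ _ hXT hX, hT]
      exact Nat.choose_symm_of_eq_add (by omega)
    · have hXn := card_le_card hXT
      rw [Nat.choose_eq_zero_of_lt (by omega), card_eq_zero, filter_eq_empty_iff]
      intro R hR hXR
      exact hX ((card_le_card hXR).trans_eq (mem_powersetCard.1 hR).2)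
  calc supersetSum m (supersetSum n θ) X
      = ∑ T ∈ powersetCard n univ with X ⊆ T,
          ∑ R ∈ powersetCard m univ with X ⊆ R ∧ R ⊆ T, θ T := by
        refine sum_comm' fun R T => ?_
        simp only [mem_filter]
        exact ⟨fun h => ⟨⟨h.1.1, h.1.2, h.2.2⟩, h.2.1, h.1.2.trans h.2.2⟩,
          fun h => ⟨⟨h.1.1, h.1.2.1⟩, h.2.1, h.1.2.2⟩⟩
    _ = (n - #X).choose (n - m) • supersetSum n θ X := by
        rw [supersetSum, smul_sum]
        refine sum_congr rfl fun T hT => ?_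
        rw [mem_filter, mem_powersetCard_univ] at hT
        rw [sum_const, hcard T hT.1 hT.2]

theorem card_powersetCard_filter_union_subset {R₀ R : Finset α}
    (hR₀ : #R₀ ≤ n) (hR : #R ≤ n) (hn : 2 * n ≤ Fintype.card α) :
    #{S ∈ powersetCard n univ | R₀ ⊆ S ∧ R ⊆ S} =
      ∑ X ∈ (R₀ ∩ R).powerset,
        (Fintype.card α - #R₀ - #R).choose (Fintype.card α - n - #X) := by
  have hinter : #(R₀ ∩ R) ≤ Fintype.card α - n := (card_le_card inter_subset_left).trans (by omega)
  have hunion := card_union_add_card_inter R₀ R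
  rw [← add_card_choose_eq_sum_powerset _ _ _ hinter]
  simp only [← union_subset_iff]
  by_cases h : #(R₀ ∪ R) ≤ n
  · rw [card_filter_powersetCard_subset _ _ _ (subset_univ _) h, card_univ,
      ← Nat.choose_symm (by omega)]
    congr 1 <;> omega
  · rw [Nat.choose_eq_zero_of_lt (by omega), card_eq_zero, filter_eq_empty_iff]
    intro S hS hRS
    exact h ((card_le_card hRS).trans_eq (mem_powersetCard_univ.1 hS))

theorem supersetSum_sum_powersetCard {m : ℕ} (φ : Finset α → Q) {R₀ : Finset α}
    (hR₀ : #R₀ ≤ n) (hm : m ≤ n) (hn : 2 * n ≤ Fintype.card α) :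
    supersetSum n (fun S => ∑ R ∈ powersetCard m S, φ R) R₀ =
      ∑ X ∈ R₀.powerset,
        (Fintype.card α - #R₀ - m).choose (Fintype.card α - n - #X) • supersetSum m φ X := by
  calc supersetSum n (fun S => ∑ R ∈ powersetCard m S, φ R) R₀
      = ∑ R ∈ powersetCard m univ, ∑ S ∈ powersetCard n univ with R₀ ⊆ S ∧ R ⊆ S, φ R := by
        refine sum_comm' fun S R => ?_
        simp only [mem_filter, mem_powersetCard, subset_univ, true_and]
        tauto
    _ = ∑ R ∈ powersetCard m univ, ∑ X ∈ (R₀ ∩ R).powerset,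
          (Fintype.card α - #R₀ - m).choose (Fintype.card α - n - #X) • φ R := by
        refine sum_congr rfl fun R hR => ?_
        rw [mem_powersetCard_univ] at hR
        rw [sum_const, card_powersetCard_filter_union_subset hR₀ (hR.trans_le hm) hn, hR, sum_smul]
    _ = _ := by
        simp only [supersetSum, smul_sum]
        refine sum_comm' fun R X => ?_
        simp only [mem_filter, mem_powerset, subset_inter_iff]
        tauto

theorem supersetSum_sum_powersetCard_supersetSum {R : Finset α} {j t : ℕ} (hR : #R + j = n)
    (ht : t ≤ n) (hn : 2 * n ≤ Fintype.card α) (h0 : ∀ X ⊂ R, supersetSum n θ X = 0) :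
    supersetSum n (fun S => ∑ R' ∈ powersetCard (n - t) S, supersetSum n θ R') R =
      (j.choose t * (Fintype.card α - 2 * n + j + t).choose t) • supersetSum n θ R := by
  rw [supersetSum_sum_powersetCard _ (by omega) (Nat.sub_le n t) hn,
    sum_eq_single_of_mem R (mem_powerset_self R)]
  · have hj : n - #R = j := by omega
    have ht' : n - (n - t) = t := by omega
    have hN : Fintype.card α - #R - (n - t) = Fintype.card α - 2 * n + j + t := by omega
    have hN' : Fintype.card α - n - #R = Fintype.card α - 2 * n + j := by omega
    rw [supersetSum_supersetSum (Nat.sub_le n t), smul_smul, hj, ht', hN, hN', Nat.choose_symm_add,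
      mul_comm]
  · intro X hX hXR
    rw [supersetSum_supersetSum (Nat.sub_le n t), h0 X ((mem_powerset.1 hX).ssubset_of_ne hXR),
      smul_zero, smul_zero]

variable {K : Type*} [Field K] [Module K Q]

theorem supersetSum_eq_zero (hn : 2 * n ≤ Fintype.card α) (a : ℕ → K)
    (ha : ∀ j, 1 ≤ j → j ≤ n → ∑ t ∈ Icc 1 j,
      a t * (j.choose t * (Fintype.card α - 2 * n + j + t).choose t) ≠ 0)
    (h : ∀ S, #S = n →
      ∑ t ∈ Icc 1 n, a t • ∑ R ∈ powersetCard (n - t) S, supersetSum n θ R = 0)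
    {R : Finset α} (hR : #R < n) : supersetSum n θ R = 0 := by
  induction R using Finset.strongInduction with
  | H R ih =>
    obtain ⟨j, hj⟩ := Nat.exists_eq_add_of_le hR.le
    have h0 (X : Finset α) (hX : X ⊂ R) : supersetSum n θ X = 0 :=
      ih X hX ((card_lt_card hX).trans hR)
    have hsum : (∑ t ∈ Icc 1 j,
        a t * (j.choose t * (Fintype.card α - 2 * n + j + t).choose t)) • supersetSum n θ R = 0 :=
      calc _ = ∑ t ∈ Icc 1 n, (a t * (j.choose t * (Fintype.card α - 2 * n + j + t).choose t)) •
              supersetSum n θ R := by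
            rw [sum_smul]
            refine sum_subset (Icc_subset_Icc_right (by omega)) fun t ht htj => ?_
            rw [mem_Icc] at ht htj
            rw [Nat.choose_eq_zero_of_lt (by omega), Nat.cast_zero, zero_mul, mul_zero, zero_smul]
        _ = ∑ t ∈ Icc 1 n, a t •
              supersetSum n (fun S => ∑ R' ∈ powersetCard (n - t) S, supersetSum n θ R') R := by
            refine sum_congr rfl fun t ht => ?_
            rw [supersetSum_sum_powersetCard_supersetSum hj.symm (mem_Icc.1 ht).2 hn h0, mul_smul,
              ← Nat.cast_mul, Nat.cast_smul_eq_nsmul]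
        _ = supersetSum n (fun S =>
              ∑ t ∈ Icc 1 n, a t • ∑ R' ∈ powersetCard (n - t) S, supersetSum n θ R') R := by
            simp only [supersetSum, smul_sum]
            exact sum_comm
        _ = 0 := sum_eq_zero fun S hS => h S (mem_powersetCard_univ.1 (mem_filter.1 hS).1)
    exact (smul_eq_zero.1 hsum).resolve_left (ha j (by omega) (by omega))

theorem sum_supersetSum_eq_zero_of_choose_smul_eq {S : Finset α} {k : ℕ} (hS : #S = n) (hk : k ≤ n)
    (h : n.choose k • θ S = (-1 : ℤ) ^ k • ∑ R ∈ powersetCard (n - k) S, traceSum n θ S R) :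
    ∑ t ∈ Icc 1 n, ((-1 : ℤ) ^ (t - 1) * (n - t).choose (n - k)) •
      ∑ R ∈ powersetCard (n - t) S, supersetSum n θ R = 0 := by
  set q : ℕ → Q := fun t => ∑ R ∈ powersetCard (n - t) S, supersetSum n θ R with hq
  have hreflect : ∑ R ∈ powersetCard (n - k) S, traceSum n θ S R =
      ∑ t ∈ range (n + 1), ((-1 : ℤ) ^ (k + t) * (n - t).choose (n - k)) • q t := by
    rw [sum_traceSum hS, ← sum_range_reflect]
    refine sum_congr rfl fun t ht => ?_
    rw [mem_range] at ht
    have ht' : n + 1 - 1 - t = n - t := by omega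
    rw [ht', neg_one_pow_congr (n := k + t) (by grind)]
  have hq0 : q 0 = θ S := by
    simp only [hq, Nat.sub_zero, ← hS, powersetCard_self, sum_singleton, supersetSum_of_card_eq]
  have hsum : n.choose k • θ S =
      n.choose k • θ S + ∑ t ∈ Icc 1 n, ((-1 : ℤ) ^ t * (n - t).choose (n - k)) • q t :=
    calc n.choose k • θ S
        = ∑ t ∈ range (n + 1), ((-1 : ℤ) ^ t * (n - t).choose (n - k)) • q t := by
          rw [h, hreflect, smul_sum]
          refine sum_congr rfl fun t _ => ?_
          rw [smul_smul, ← mul_assoc, ← pow_add, neg_one_pow_congr (n := t) (by grind)]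
      _ = _ := by
          rw [Nat.range_succ_eq_Icc_zero, ← insert_Icc_add_one_left_eq_Icc n.zero_le,
            sum_insert (by simp), zero_add, hq0, pow_zero, one_mul, Nat.sub_zero,
            Nat.choose_symm hk, natCast_zsmul]
  calc ∑ t ∈ Icc 1 n, ((-1 : ℤ) ^ (t - 1) * (n - t).choose (n - k)) • q t
      = -∑ t ∈ Icc 1 n, ((-1 : ℤ) ^ t * (n - t).choose (n - k)) • q t := by
        rw [← sum_neg_distrib]
        refine sum_congr rfl fun t ht => ?_
        obtain ⟨s, rfl⟩ := Nat.exists_eq_add_of_le' (mem_Icc.1 ht).1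
        rw [Nat.add_sub_cancel, pow_succ, mul_neg_one, neg_mul, neg_smul, neg_neg]
    _ = 0 := by rw [left_eq_add.1 hsum, neg_zero]

theorem traceSum_eq_of_supersetSum_eq_zero {S R : Finset α} (hS : #S = n) (hR : R ⊆ S)
    (h : ∀ R, #R < n → supersetSum n θ R = 0) :
    traceSum n θ S R = (-1 : ℤ) ^ (#R + n) • θ S := by
  rw [traceSum_eq_sum_supersetSum hR, sum_eq_single_of_mem S (mem_Icc.2 ⟨hR, Subset.rfl⟩), hS,
    supersetSum_of_card_eq hS]
  intro R' hR' hne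
  have hlt : #R' < #S := card_lt_card ((mem_Icc.1 hR').2.ssubset_of_ne hne)
  rw [h R' (hS ▸ hlt), smul_zero]

theorem traceSum_eq_of_choose_smul_eq (hn : 2 * n ≤ Fintype.card α) {k : ℕ} (hk : k ≤ n)
    (hK : ∀ j, 1 ≤ j → j ≤ n → ∑ t ∈ Icc 1 j, (-1 : K) ^ (t - 1) * (n - t).choose (n - k) *
      j.choose t * (Fintype.card α - 2 * n + j + t).choose t ≠ 0)
    (h : ∀ S, #S = n →
      n.choose k • θ S = (-1 : ℤ) ^ k • ∑ R ∈ powersetCard (n - k) S, traceSum n θ S R)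
    {S R : Finset α} (hS : #S = n) (hR : R ⊆ S) :
    traceSum n θ S R = (-1 : ℤ) ^ (#R + n) • θ S := by
  refine traceSum_eq_of_supersetSum_eq_zero hS hR fun R' hR' =>
    supersetSum_eq_zero hn (fun t => (-1 : K) ^ (t - 1) * (n - t).choose (n - k)) ?_ ?_ hR'
  · simpa only [mul_assoc] using hK
  · intro S hS
    rw [← sum_supersetSum_eq_zero_of_choose_smul_eq hS hk (h S hS)]
    refine sum_congr rfl fun t _ => ?_
    rw [← Int.cast_smul_eq_zsmul K]
    push_cast
    rfl

end SubsetSums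

section Permutations

variable {α : Type*} [DecidableEq α]

theorem factorsThrough_smul_finset [Finite α] {Q : Type*} (U : Finset α) (f : Equiv.Perm α → Q)
    (hf : ∀ π x y, x ≠ y → (x ∈ U ↔ y ∈ U) → f (π * Equiv.swap x y) = f π) :
    Function.FactorsThrough f (· • U) := by
  set C : Set (Equiv.Perm α) := {σ | ∃ x y, x ≠ y ∧ (x ∈ U ↔ y ∈ U) ∧ σ = Equiv.swap x y}
  have hswap (σ : Equiv.Perm α) (hσ : σ ∈ C) : σ.IsSwap := by
    obtain ⟨x, y, hxy, -, rfl⟩ := hσ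
    exact ⟨x, y, hxy, rfl⟩
  have hinv (σ : Equiv.Perm α) (hσ : σ ∈ Subgroup.closure C) : ∀ π, f (π * σ) = f π := by
    induction hσ using Subgroup.closure_induction with
    | mem σ hσ =>
      obtain ⟨x, y, hxy, hU, rfl⟩ := hσ
      exact fun π => hf π x y hxy hU
    | one => exact fun π => by rw [mul_one]
    | mul σ τ _ _ hσ hτ => exact fun π => by rw [← mul_assoc, hτ, hσ]
    | inv σ _ hσ => exact fun π => by rw [← hσ, inv_mul_cancel_right]
  intro π τ h
  have hstab (x : α) : x ∈ U ↔ (π⁻¹ * τ) x ∈ U := by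
    have hU : (π⁻¹ * τ) • U = U := by rw [mul_smul, show τ • U = π • U from h.symm, inv_smul_smul]
    nth_rw 2 [← hU]
    exact (smul_mem_smul_finset_iff (π⁻¹ * τ)).symm
  rw [← hinv (π⁻¹ * τ) ?_ π, mul_inv_cancel_left]
  refine (mem_closure_isSwap hswap).2 ⟨Set.toFinite _, fun x => ?_⟩
  by_cases hx : (π⁻¹ * τ) x = x
  · rw [hx]
    exact MulAction.mem_orbit_self x
  · exact ⟨⟨Equiv.swap ((π⁻¹ * τ) x) x, Subgroup.subset_closure ⟨_, x, hx, (hstab x).symm, rfl⟩⟩,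
      Equiv.swap_apply_right _ _⟩

theorem exists_perm_smul_finset_eq [Finite α] {S T : Finset α} (h : #S = #T) :
    ∃ π : Equiv.Perm α, π • S = T := by
  obtain ⟨π, hπ⟩ := (Set.powersetCard.isPretransitive (α := α) (n := #T)).exists_smul_eq
    ⟨S, h⟩ ⟨T, rfl⟩
  exact ⟨π, congrArg Subtype.val hπ⟩

theorem swap_smul_finset {S : Finset α} {a b : α} (ha : a ∉ S) (hb : b ∈ S) :
    Equiv.swap a b • S = insert a (S.erase b) := by
  ext x
  rw [← inv_smul_mem_iff, Equiv.swap_inv, Equiv.Perm.smul_def, Equiv.swap_apply_def]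
  grind

theorem viaEmbedding_smul_map {β : Type*} [DecidableEq β] (τ : Equiv.Perm β) (ι : β ↪ α)
    (S : Finset β) : τ.viaEmbedding ι • S.map ι = (τ • S).map ι := by
  simp only [map_eq_image, smul_finset_def, image_image]
  exact image_congr fun x _ => Equiv.Perm.viaEmbedding_apply τ ι x

/-- The product of the transpositions of `f i` and `g i`: when these points are distinct, the
permutation exchanging two enumerated sets. -/
def swapProd {k : ℕ} (f g : Fin k → α) : Equiv.Perm α :=
  (List.ofFn fun i => Equiv.swap (f i) (g i)).prod

variable {k : ℕ} {f g : Fin k → α}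

theorem swapProd_succ (f g : Fin (k + 1) → α) :
    swapProd f g = Equiv.swap (f 0) (g 0) * swapProd (f ∘ Fin.succ) (g ∘ Fin.succ) := by
  rw [swapProd, List.ofFn_succ, List.prod_cons]
  rfl

theorem sign_swapProd [Fintype α] (hfg : ∀ i, f i ≠ g i) :
    Equiv.Perm.sign (swapProd f g) = (-1) ^ k := by
  simp only [swapProd, map_list_prod, List.map_ofFn, Function.comp_def,
    Equiv.Perm.sign_swap (hfg _), List.ofFn_const, List.prod_replicate]

theorem swapProd_smul (hf : f.Injective) (hg : g.Injective) {U : Finset α} (hfU : ∀ i, f i ∉ U)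
    (hgU : ∀ i, g i ∈ U) : swapProd f g • U = U \ univ.image g ∪ univ.image f := by
  induction k with
  | zero => simp [swapProd]
  | succ k ih =>
    have himage (h : Fin (k + 1) → α) :
        univ.image h = insert (h 0) (univ.image (h ∘ Fin.succ)) := by
      rw [Fin.univ_succ, cons_eq_insert, image_insert, map_eq_image, image_image]
      rfl
    have hf0 : f 0 ∉ univ.image (f ∘ Fin.succ) := by
      simp only [mem_image, Function.comp_apply, hf.eq_iff, Fin.succ_ne_zero, and_false,
        exists_false, not_false_eq_true]
    have hg0 : g 0 ∉ univ.image (g ∘ Fin.succ) := by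
      simp only [mem_image, Function.comp_apply, hg.eq_iff, Fin.succ_ne_zero, and_false,
        exists_false, not_false_eq_true]
    have hgf : g 0 ∉ univ.image (f ∘ Fin.succ) := fun h => by
      obtain ⟨i, -, hi⟩ := mem_image.1 h
      exact ne_of_mem_of_not_mem (hgU 0) (hfU i.succ) hi.symm
    rw [swapProd_succ, mul_smul,
      ih (hf.comp (Fin.succ_injective k)) (hg.comp (Fin.succ_injective k)) (fun _ => hfU _)
        fun _ => hgU _,
      swap_smul_finset (notMem_union.2 ⟨fun h => hfU 0 (mem_sdiff.1 h).1, hf0⟩)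
        (mem_union_left _ (mem_sdiff.2 ⟨hgU 0, hg0⟩)),
      himage f, himage g, erase_union_distrib, erase_eq_of_notMem hgf, union_insert, sdiff_insert]

theorem ofSubtype_swapProd {p : α → Prop} [DecidablePred p] (f g : Fin k → Subtype p) :
    Equiv.Perm.ofSubtype (swapProd f g) = swapProd (fun i => (f i : α)) fun i => (g i : α) := by
  simp only [swapProd, map_list_prod, List.map_ofFn, Function.comp_def,
    Equiv.Perm.ofSubtype_swap_eq]

end Permutations

section TraceSum

variable {α Q : Type*} [Fintype α] [DecidableEq α] [AddCommGroup Q] {n : ℕ} {θ : Finset α → Q}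

theorem traceSum_sdiff {S B : Finset α} (hS : #S = n) (hB : B ⊆ S) :
    traceSum n θ S (S \ B) = ∑ A ∈ powersetCard #B Sᶜ, θ (S \ B ∪ A) := by
  have hBS := card_le_card hB
  have hdisj (A : Finset α) (hA : A ∈ powersetCard #B Sᶜ) : Disjoint S A :=
    disjoint_left.2 fun x hxS hxA => mem_compl.1 ((mem_powersetCard.1 hA).1 hxA) hxS
  refine sum_nbij' (· \ S) (S \ B ∪ ·) ?_ ?_ ?_ ?_ ?_
  · intro T hT
    rw [mem_filter, mem_powersetCard_univ] at hT
    rw [mem_powersetCard]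
    have := card_inter_add_card_sdiff T S
    rw [hT.2, card_sdiff_of_subset hB] at this
    exact ⟨fun x hx => mem_compl.2 (mem_sdiff.1 hx).2, by omega⟩
  · intro A hA
    rw [mem_filter, mem_powersetCard_univ,
      card_union_of_disjoint ((hdisj A hA).mono_left sdiff_subset), card_sdiff_of_subset hB,
      (mem_powersetCard.1 hA).2, union_inter_distrib_right, inter_eq_left.2 sdiff_subset,
      disjoint_iff_inter_eq_empty.1 (hdisj A hA).symm, union_empty]
    exact ⟨by omega, rfl⟩
  · intro T hT
    rw [← (mem_filter.1 hT).2, union_comm, sdiff_union_inter]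
  · intro A hA
    rw [union_sdiff_distrib, sdiff_eq_empty_iff_subset.2 sdiff_subset, empty_union,
      (hdisj A hA).symm.sdiff_eq_left]
  · intro T hT
    rw [← (mem_filter.1 hT).2, union_comm, sdiff_union_inter]

theorem traceSum_smul (π : Equiv.Perm α) (S R : Finset α) :
    traceSum n (fun T => θ (π • T)) S R = traceSum n θ (π • S) (π • R) := by
  refine sum_nbij' (π • ·) (π⁻¹ • ·) ?_ ?_ ?_ ?_ ?_
  · intro T hT
    simp only [mem_filter, mem_powersetCard_univ, card_smul_finset, ← smul_finset_inter] at hT ⊢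
    exact ⟨hT.1, by rw [hT.2]⟩
  · intro T hT
    simp only [mem_filter, mem_powersetCard_univ, card_smul_finset] at hT ⊢
    exact ⟨hT.1, by rw [← smul_left_cancel_iff π, smul_finset_inter, smul_inv_smul, hT.2]⟩
  · exact fun T _ => inv_smul_smul π T
  · exact fun T _ => smul_inv_smul π T
  · exact fun _ _ => rfl

theorem map_traceSum {F Q' : Type*} [AddCommGroup Q'] [FunLike F Q Q'] [AddMonoidHomClass F Q Q']
    (f : F) (S R : Finset α) : traceSum n (fun T => f (θ T)) S R = f (traceSum n θ S R) :=
  (map_sum f _ _).symm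

end TraceSum

section ColumnPair

variable {L : ℕ} (μ : Fin L → ℕ) (c : ℕ) (hc : c + 1 < L)

/-- The cells of the two adjacent columns `c` and `c + 1`, between which the exchanges of a Garnir
relation take place. -/
abbrev ColPair : Type := {x : Cell μ // x.1 = ⟨c, by omega⟩ ∨ x.1 = ⟨c + 1, hc⟩}

/-- The inclusion of column `c`, indexed by its rows. -/
def leftCell : Fin (μ ⟨c, by omega⟩) ↪ ColPair μ c hc where
  toFun i := ⟨⟨⟨c, by omega⟩, i⟩, Or.inl rfl⟩
  inj' i j h := by simpa using h

/-- The inclusion of column `c + 1`, indexed by its rows. -/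
def rightCell : Fin (μ ⟨c + 1, hc⟩) ↪ ColPair μ c hc where
  toFun i := ⟨⟨⟨c + 1, hc⟩, i⟩, Or.inr rfl⟩
  inj' i j h := by simpa using h

/-- Column `c + 1`, as a set of cells. -/
def rightCol : Finset (ColPair μ c hc) := univ.map (rightCell μ c hc)

theorem card_rightCol : #(rightCol μ c hc) = μ ⟨c + 1, hc⟩ := by
  rw [rightCol, card_map, card_univ, Fintype.card_fin]

theorem mem_rightCol {x : ColPair μ c hc} : x ∈ rightCol μ c hc ↔ x.1.1 = ⟨c + 1, hc⟩ := by
  rw [rightCol, mem_map]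
  refine ⟨fun ⟨i, _, hi⟩ => hi ▸ rfl, fun h => ?_⟩
  obtain ⟨⟨d, i⟩, hx⟩ := x
  subst h
  exact ⟨i, mem_univ _, rfl⟩

theorem rightCell_mem_rightCol (i) : rightCell μ c hc i ∈ rightCol μ c hc :=
  mem_map_of_mem _ (mem_univ i)

theorem leftCell_notMem_rightCol (i) : leftCell μ c hc i ∉ rightCol μ c hc := by
  rw [mem_rightCol]
  exact fun h => (Nat.lt_succ_self c).ne (congrArg Fin.val h)

theorem compl_rightCol : (rightCol μ c hc)ᶜ = univ.map (leftCell μ c hc) := by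
  ext x
  rw [mem_compl, mem_map]
  constructor
  · obtain ⟨⟨d, i⟩, hx⟩ := x
    intro h
    rw [mem_rightCol] at h
    obtain rfl := hx.resolve_right h
    exact ⟨i, mem_univ _, rfl⟩
  · rintro ⟨i, -, rfl⟩
    exact leftCell_notMem_rightCol μ c hc i

theorem card_colPair : Fintype.card (ColPair μ c hc) = μ ⟨c, by omega⟩ + μ ⟨c + 1, hc⟩ := by
  rw [← card_add_card_compl (rightCol μ c hc), compl_rightCol, card_map, card_rightCol, card_univ,
    Fintype.card_fin, add_comm]

end ColumnPair

section Tabloids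

variable {K : Type} [Field K] {L r : ℕ} {μ : Fin L → ℕ} {c : ℕ} {hc : c + 1 < L}

theorem tabloid_swap (T : Tab μ r) {x y : Cell μ} (hxy : x ≠ y) (h : x.1 = y.1) :
    tabloid K μ r ((Equiv.swap x y).trans T) = -tabloid K μ r T := by
  obtain ⟨d, i⟩ := x
  obtain ⟨d', j⟩ := y
  obtain rfl : d = d' := h
  rw [eq_neg_iff_add_eq_zero, add_comm]
  exact (Submodule.Quotient.mk_eq_zero (colRel K μ r)).2
    (Submodule.subset_span ⟨T, d, i, j, by rintro rfl; exact hxy rfl, rfl⟩)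

/-- Up to sign, a column tabloid obtained from `T` by permuting the cells of columns `c` and `c + 1`
depends only on which cells of `T` provide the entries of column `c + 1`. `Represents T θ` says
that `θ` gives this dependence. -/
def Represents (T : Tab μ r) (θ : Finset (ColPair μ c hc) → MLam K μ r) : Prop :=
  ∀ π : Equiv.Perm (ColPair μ c hc), tabloid K μ r ((Equiv.Perm.ofSubtype π).trans T) =
    Equiv.Perm.sign π • θ (π • rightCol μ c hc)

variable (K c hc) in
theorem exists_represents (T : Tab μ r) :
    ∃ θ : Finset (ColPair μ c hc) → MLam K μ r, Represents T θ := by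
  set f : Equiv.Perm (ColPair μ c hc) → MLam K μ r := fun π =>
    Equiv.Perm.sign π • tabloid K μ r ((Equiv.Perm.ofSubtype π).trans T)
  have hf : Function.FactorsThrough f (· • rightCol μ c hc) := by
    refine factorsThrough_smul_finset _ f fun π x y hxy h => ?_
    have hcol : x.1.1 = y.1.1 := by
      rw [mem_rightCol, mem_rightCol] at h
      by_cases hx : x.1.1 = ⟨c + 1, hc⟩
      · exact hx.trans (h.1 hx).symm
      · exact (x.2.resolve_right hx).trans (y.2.resolve_right fun hy => hx (h.2 hy)).symm
    have htrans : (Equiv.Perm.ofSubtype (π * Equiv.swap x y)).trans T =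
        (Equiv.swap (x : Cell μ) y).trans ((Equiv.Perm.ofSubtype π).trans T) := by
      rw [map_mul, Equiv.Perm.ofSubtype_swap_eq]
      rfl
    simp only [f, htrans, tabloid_swap _ (Subtype.coe_ne_coe.2 hxy) hcol, Equiv.Perm.sign_mul,
      Equiv.Perm.sign_swap hxy, mul_neg_one, Units.neg_smul, smul_neg, neg_neg]
  refine ⟨Function.extend (· • rightCol μ c hc) f 0, fun π => ?_⟩
  rw [hf.extend_apply, smul_smul, Int.units_mul_self, one_smul]

variable {T : Tab μ r} {θ : Finset (ColPair μ c hc) → MLam K μ r}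

theorem Represents.smul (hθ : Represents T θ) (π : Equiv.Perm (ColPair μ c hc)) :
    Represents ((Equiv.Perm.ofSubtype π).trans T) fun S => Equiv.Perm.sign π • θ (π • S) := by
  intro τ
  have h := hθ (π * τ)
  rw [map_mul, Equiv.Perm.sign_mul, mul_comm, mul_smul, mul_smul] at h
  exact h

theorem Represents.tabloid_eq (hθ : Represents T θ) : tabloid K μ r T = θ (rightCol μ c hc) := by
  have h := hθ 1
  rw [map_one, Equiv.Perm.sign_one, one_smul, one_smul] at h
  exact h

theorem Represents.tabloid_swapProd (hθ : Represents T θ) {k : ℕ}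
    (a : Fin k ↪ Fin (μ ⟨c, by omega⟩)) (b : Fin k ↪ Fin (μ ⟨c + 1, hc⟩)) :
    tabloid K μ r ((swapProd (fun i => (⟨⟨c, by omega⟩, a i⟩ : Cell μ))
        fun i => ⟨⟨c + 1, hc⟩, b i⟩).trans T) =
      (-1 : ℤ) ^ k • θ (rightCol μ c hc \ (univ.map b).map (rightCell μ c hc) ∪
        (univ.map a).map (leftCell μ c hc)) := by
  have hU := leftCell_notMem_rightCol μ c hc
  have hV := rightCell_mem_rightCol μ c hc
  have hne (i : Fin k) : (leftCell μ c hc ∘ a) i ≠ (rightCell μ c hc ∘ b) i :=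
    (ne_of_mem_of_not_mem (hV (b i)) (hU (a i))).symm
  have h := hθ (swapProd (leftCell μ c hc ∘ a) (rightCell μ c hc ∘ b))
  rw [ofSubtype_swapProd,
    swapProd_smul ((leftCell μ c hc).injective.comp a.injective)
      ((rightCell μ c hc).injective.comp b.injective) (fun _ => hU _) fun _ => hV _,
    sign_swapProd hne] at h
  simp only [map_eq_image, image_image, Units.smul_def, Units.val_pow_eq_pow_val, Units.val_neg,
    Units.val_one] at h ⊢
  exact h

theorem traceSum_rightCol (θ : Finset (ColPair μ c hc) → MLam K μ r)
    (B : Finset (Fin (μ ⟨c + 1, hc⟩))) :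
    traceSum (μ ⟨c + 1, hc⟩) θ (rightCol μ c hc) (rightCol μ c hc \ B.map (rightCell μ c hc)) =
      ∑ A ∈ powersetCard #B univ, θ (rightCol μ c hc \ B.map (rightCell μ c hc) ∪
        A.map (leftCell μ c hc)) := by
  rw [traceSum_sdiff (card_rightCol μ c hc) (map_subset_map.2 (subset_univ B)), compl_rightCol,
    powersetCard_map, sum_map, card_map]
  rfl

variable (μ c hc) in
/-- The top `k` cells of column `c + 1`, which the Garnir relation exchanges. -/
def topCells (k : ℕ) (hk : k ≤ μ ⟨c + 1, hc⟩) : Finset (ColPair μ c hc) :=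
  (univ.map (Fin.castLEEmb hk)).map (rightCell μ c hc)

theorem Represents.garnirElt_eq (hθ : Represents T θ) {k : ℕ} (hk : k ≤ μ ⟨c + 1, hc⟩) :
    garnirElt K μ r T c hc k hk = θ (rightCol μ c hc) -
      (-1 : ℤ) ^ k • traceSum (μ ⟨c + 1, hc⟩) θ (rightCol μ c hc)
        (rightCol μ c hc \ topCells μ c hc k hk) := by
  rw [garnirElt, hθ.tabloid_eq, topCells, traceSum_rightCol, smul_sum, card_map, card_univ,
    Fintype.card_fin, ← sum_attach (powersetCard k _)]
  congr 1
  refine sum_congr rfl fun A _ => ?_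
  have h := hθ.tabloid_swapProd (A.1.orderEmbOfFin (mem_powersetCard.1 A.2).2).toEmbedding
    (Fin.castLEEmb hk)
  rw [map_orderEmbOfFin_univ] at h
  exact h

theorem Represents.sgrElt_eq (hθ : Represents T θ) (k : ℕ) :
    sgrElt K μ r T c hc k = (μ ⟨c + 1, hc⟩).choose k • θ (rightCol μ c hc) -
      (-1 : ℤ) ^ k • ∑ B ∈ powersetCard k (rightCol μ c hc),
        traceSum (μ ⟨c + 1, hc⟩) θ (rightCol μ c hc) (rightCol μ c hc \ B) := by
  rw [sgrElt, hθ.tabloid_eq, Nat.cast_smul_eq_nsmul K, rightCol, powersetCard_map, sum_map,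
    smul_sum, sum_comm, ← sum_attach (powersetCard k _)]
  congr 1
  refine sum_congr rfl fun B _ => ?_
  have hBk := (mem_powersetCard.1 B.2).2
  refine Eq.trans ?_ (congrArg _ (traceSum_rightCol θ B.1).symm)
  rw [hBk, smul_sum, ← sum_attach (powersetCard k _)]
  refine sum_congr rfl fun A _ => ?_
  have h := hθ.tabloid_swapProd (A.1.orderEmbOfFin (mem_powersetCard.1 A.2).2).toEmbedding
    (B.1.orderEmbOfFin hBk).toEmbedding
  rw [map_orderEmbOfFin_univ, map_orderEmbOfFin_univ] at h
  exact h

end Tabloids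

section Transport

variable {K : Type} [Field K] {L r : ℕ} {μ : Fin L → ℕ} {c : ℕ} {hc : c + 1 < L} {T : Tab μ r}
  {θ : Finset (ColPair μ c hc) → MLam K μ r}

theorem Represents.garnirElt_smul (hθ : Represents T θ) (π : Equiv.Perm (ColPair μ c hc)) {k : ℕ}
    (hk : k ≤ μ ⟨c + 1, hc⟩) :
    garnirElt K μ r ((Equiv.Perm.ofSubtype π).trans T) c hc k hk =
      Equiv.Perm.sign π • (θ (π • rightCol μ c hc) - (-1 : ℤ) ^ k •
        traceSum (μ ⟨c + 1, hc⟩) θ (π • rightCol μ c hc)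
          (π • (rightCol μ c hc \ topCells μ c hc k hk))) := by
  have htrace := map_traceSum (n := μ ⟨c + 1, hc⟩) (θ := fun S => θ (π • S))
    (DistribSMul.toAddMonoidHom (MLam K μ r) (Equiv.Perm.sign π))
  simp only [DistribSMul.toAddMonoidHom_apply] at htrace
  rw [(hθ.smul π).garnirElt_eq, htrace, traceSum_smul, smul_sub, smul_comm (Equiv.Perm.sign π)]

theorem Represents.sgrElt_smul (hθ : Represents T θ) (π : Equiv.Perm (ColPair μ c hc)) {k : ℕ}
    (hk : k ≤ μ ⟨c + 1, hc⟩) :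
    sgrElt K μ r ((Equiv.Perm.ofSubtype π).trans T) c hc k =
      Equiv.Perm.sign π • ((μ ⟨c + 1, hc⟩).choose k • θ (π • rightCol μ c hc) -
        (-1 : ℤ) ^ k • ∑ R ∈ powersetCard (μ ⟨c + 1, hc⟩ - k) (π • rightCol μ c hc),
          traceSum (μ ⟨c + 1, hc⟩) θ (π • rightCol μ c hc) R) := by
  have htrace := map_traceSum (n := μ ⟨c + 1, hc⟩) (θ := fun S => θ (π • S))
    (DistribSMul.toAddMonoidHom (MLam K μ r) (Equiv.Perm.sign π))
  simp only [DistribSMul.toAddMonoidHom_apply] at htrace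
  have hsum : ∑ R ∈ powersetCard (μ ⟨c + 1, hc⟩ - k) (rightCol μ c hc),
      traceSum (μ ⟨c + 1, hc⟩) θ (π • rightCol μ c hc) (π • R) =
      ∑ R ∈ powersetCard (μ ⟨c + 1, hc⟩ - k) (π • rightCol μ c hc),
        traceSum (μ ⟨c + 1, hc⟩) θ (π • rightCol μ c hc) R :=
    sum_equiv (MulAction.toPerm π) (fun R => by
      simp only [mem_powersetCard, MulAction.toPerm_apply, smul_finset_subset_smul_finset_iff,
        card_smul_finset]) fun _ _ => rfl
  rw [(hθ.smul π).sgrElt_eq, sum_powersetCard_sdiff (hk.trans_eq (card_rightCol μ c hc).symm),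
    card_rightCol]
  simp only [htrace, traceSum_smul]
  rw [← smul_sum, hsum, smul_sub, smul_comm (Equiv.Perm.sign π), smul_comm (Equiv.Perm.sign π)]

end Transport

section Comparison

variable {K : Type} [Field K] {L r : ℕ} {μ : Fin L → ℕ} {kk : ℕ → ℕ} {c : ℕ} {hc : c + 1 < L}

theorem sgrElt_mem_garnirSub (T : Tab μ r) {k : ℕ} (hk : k ≤ μ ⟨c + 1, hc⟩) :
    sgrElt K μ r T c hc k ∈ garnirSub K μ r := by
  obtain ⟨θ, hθ⟩ := exists_represents K c hc T
  have hsgr : sgrElt K μ r T c hc k = ∑ B ∈ powersetCard k univ, (θ (rightCol μ c hc) -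
      (-1 : ℤ) ^ k • traceSum (μ ⟨c + 1, hc⟩) θ (rightCol μ c hc)
        (rightCol μ c hc \ B.map (rightCell μ c hc))) := by
    rw [hθ.sgrElt_eq, sum_sub_distrib, sum_const, card_powersetCard, card_univ, Fintype.card_fin,
      smul_sum, rightCol, powersetCard_map, sum_map]
    rfl
  rw [hsgr]
  refine Submodule.sum_mem _ fun B hB => ?_
  obtain ⟨τ, hτ⟩ := exists_perm_smul_finset_eq (S := univ.map (Fin.castLEEmb hk)) (T := B) (by
    rw [card_map, card_univ, Fintype.card_fin, (mem_powersetCard.1 hB).2])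
  have hcol : τ.viaEmbedding (rightCell μ c hc) • rightCol μ c hc = rightCol μ c hc := by
    rw [rightCol, viaEmbedding_smul_map, smul_finset_univ]
  have htop : τ.viaEmbedding (rightCell μ c hc) • topCells μ c hc k hk =
      B.map (rightCell μ c hc) := by
    rw [topCells, viaEmbedding_smul_map, hτ]
  have hmem : garnirElt K μ r
      ((Equiv.Perm.ofSubtype (τ.viaEmbedding (rightCell μ c hc))).trans T) c hc k hk ∈
      garnirSub K μ r := Submodule.subset_span ⟨_, c, hc, k, hk, rfl⟩
  rwa [hθ.garnirElt_smul, smul_finset_sdiff, hcol, htop,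
    Submodule.smul_mem_iff'] at hmem

theorem garnirElt_mem_sgrSub (T : Tab μ r) (hle : μ ⟨c + 1, hc⟩ ≤ μ ⟨c, by omega⟩)
    (hkc : kk c ≤ μ ⟨c + 1, hc⟩)
    (hcond : ∀ j, 1 ≤ j → j ≤ μ ⟨c + 1, hc⟩ → ∑ t ∈ Icc 1 j,
      (-1 : K) ^ (t - 1) * (μ ⟨c + 1, hc⟩ - t).choose (μ ⟨c + 1, hc⟩ - kk c) * j.choose t *
        (μ ⟨c, by omega⟩ - μ ⟨c + 1, hc⟩ + j + t).choose t ≠ 0)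
    {k : ℕ} (hk : k ≤ μ ⟨c + 1, hc⟩) : garnirElt K μ r T c hc k hk ∈ sgrSub K μ r kk := by
  obtain ⟨θ, hθ⟩ := exists_represents K c hc T
  have hcard := card_colPair μ c hc
  have hrel (S : Finset (ColPair μ c hc)) (hS : #S = μ ⟨c + 1, hc⟩) :
      (μ ⟨c + 1, hc⟩).choose (kk c) • (sgrSub K μ r kk).mkQ (θ S) = (-1 : ℤ) ^ kk c •
        ∑ R ∈ powersetCard (μ ⟨c + 1, hc⟩ - kk c) S,
          traceSum (μ ⟨c + 1, hc⟩) (fun S => (sgrSub K μ r kk).mkQ (θ S)) S R := by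
    obtain ⟨π, rfl⟩ := exists_perm_smul_finset_eq ((card_rightCol μ c hc).trans hS.symm)
    have hmem : sgrElt K μ r ((Equiv.Perm.ofSubtype π).trans T) c hc (kk c) ∈ sgrSub K μ r kk :=
      Submodule.subset_span ⟨_, c, hc, rfl⟩
    rw [hθ.sgrElt_smul π hkc, Submodule.smul_mem_iff',
      ← Submodule.Quotient.mk_eq_zero, ← Submodule.mkQ_apply, map_sub, sub_eq_zero, map_nsmul,
      map_zsmul, map_sum] at hmem
    simpa only [map_traceSum] using hmem
  have htop : topCells μ c hc k hk ⊆ rightCol μ c hc := map_subset_map.2 (subset_univ _)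
  have htrace := traceSum_eq_of_choose_smul_eq (by omega) hkc (K := K)
    (by rwa [show Fintype.card (ColPair μ c hc) - 2 * μ ⟨c + 1, hc⟩ =
      μ ⟨c, by omega⟩ - μ ⟨c + 1, hc⟩ by omega]) hrel (card_rightCol μ c hc)
    (sdiff_subset : rightCol μ c hc \ topCells μ c hc k hk ⊆ _)
  have hsign : (-1 : ℤ) ^ (#(rightCol μ c hc \ topCells μ c hc k hk) + μ ⟨c + 1, hc⟩) =
      (-1 : ℤ) ^ k := by
    rw [card_sdiff_of_subset htop, card_rightCol, topCells, card_map, card_map, card_univ,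
      Fintype.card_fin]
    exact neg_one_pow_congr (by grind)
  rw [map_traceSum, hsign] at htrace
  rw [hθ.garnirElt_eq, ← Submodule.Quotient.mk_eq_zero, ← Submodule.mkQ_apply, map_sub, map_zsmul,
    htrace, smul_smul, ← pow_add, Even.neg_one_pow ⟨k, rfl⟩, one_smul, sub_self]

theorem map_sgrElt {ρ : Equiv.Perm (Fin r) → (MLam K μ r →ₗ[K] MLam K μ r)}
    (hρ : IsTabAction K μ r ρ) (σ : Equiv.Perm (Fin r)) (T : Tab μ r) (k : ℕ) :
    ρ σ (sgrElt K μ r T c hc k) = sgrElt K μ r (T.trans σ) c hc k := by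
  simp only [sgrElt, map_sub, map_smul, map_sum, hρ σ, Equiv.trans_assoc]

theorem sgrSub_le_comap {ρ : Equiv.Perm (Fin r) → (MLam K μ r →ₗ[K] MLam K μ r)}
    (hρ : IsTabAction K μ r ρ) (σ : Equiv.Perm (Fin r)) :
    sgrSub K μ r kk ≤ (sgrSub K μ r kk).comap (ρ σ) := by
  refine Submodule.span_le.2 ?_
  rintro _ ⟨T, c, hc, rfl⟩
  rw [SetLike.mem_coe, Submodule.mem_comap, map_sgrElt hρ]
  exact Submodule.subset_span ⟨_, c, hc, rfl⟩

theorem isQuotIso_self {G M : Type} [AddCommGroup M] [Module K M] {N : Submodule K M}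
    {ρ : G → M →ₗ[K] M} (hN : ∀ g, N ≤ N.comap (ρ g)) : IsQuotIso K N N ρ ρ := by
  refine ⟨LinearEquiv.refl K _, fun g x y hxy => ?_⟩
  rw [LinearEquiv.refl_apply, Submodule.Quotient.eq] at hxy ⊢
  rw [← map_sub]
  exact hN g hxy

end Comparison

end Specht

namespace Specht

theorem statement13_general (K : Type) [Field K] (L : ℕ) (μ : Fin L → ℕ) (hμ : Antitone μ)
    (kk : ℕ → ℕ) (hk : ∀ (c : ℕ) (hc : c + 1 < L), kk c ≤ μ ⟨c + 1, hc⟩)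
    (ρ : Equiv.Perm (Fin (∑ i, μ i)) → (MLam K μ (∑ i, μ i) →ₗ[K] MLam K μ (∑ i, μ i)))
    (hρ : IsTabAction K μ (∑ i, μ i) ρ)
    (hcond : ∀ (c : ℕ) (hc : c + 1 < L) (j : ℕ), 1 ≤ j → j ≤ μ ⟨c + 1, hc⟩ →
      ∑ t ∈ Finset.Icc 1 j,
        (-1 : K) ^ (t - 1) * (μ ⟨c + 1, hc⟩ - t).choose (μ ⟨c + 1, hc⟩ - kk c) * j.choose t *
          (μ ⟨c, by omega⟩ - μ ⟨c + 1, hc⟩ + j + t).choose t ≠ 0) :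
    IsQuotIso K (sgrSub K μ (∑ i, μ i) kk) (garnirSub K μ (∑ i, μ i)) ρ ρ ∧
      sgrSub K μ (∑ i, μ i) kk = garnirSub K μ (∑ i, μ i) := by
  have heq : sgrSub K μ (∑ i, μ i) kk = garnirSub K μ (∑ i, μ i) := by
    refine le_antisymm (Submodule.span_le.2 ?_) (Submodule.span_le.2 ?_)
    · rintro _ ⟨T, c, hc, rfl⟩
      exact sgrElt_mem_garnirSub T (hk c hc)
    · rintro _ ⟨T, c, hc, k, hkc, rfl⟩
      exact garnirElt_mem_sgrSub T (hμ (Fin.mk_le_mk.2 (Nat.le_succ c))) (hk c hc) (hcond c hc) hkc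
  exact ⟨heq ▸ isQuotIso_self (sgrSub_le_comap hρ), heq⟩

/-- Theorem 6.2 of the paper: let `λ` be a partition of `r` with conjugate `μ`, and let
`k_1, …, k_{λ_1−1}` be positive integers with `k_c ≤ μ_{c+1}`. If
`Σ_{t=1}^{j} (−1)^{t−1} C(μ_{c+1}−t, μ_{c+1}−k_c) C(j,t) C(μ_c−μ_{c+1}+j+t, t) ≠ 0`
for all `c` and all `1 ≤ j ≤ μ_{c+1}`, then `M^λ / SGR^λ(k_1,…,k_{λ_1−1}) ≅ S^λ` as
`𝔖_r`-modules; equivalently `SGR^λ(k_1,…,k_{λ_1−1}) = G^λ` as subspaces of `M^λ`. -/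
theorem statement13 (K : Type) [Field K] [CharZero K] (L r : ℕ) (μ : Fin L → ℕ)
    (hpos : ∀ i, 0 < μ i) (hanti : ∀ i j : Fin L, i ≤ j → μ j ≤ μ i)
    (hr : r = ∑ i, μ i)
    (kk : ℕ → ℕ)
    (hk : ∀ (c : ℕ) (hc : c + 1 < L), 1 ≤ kk c ∧ kk c ≤ μ ⟨c+1, hc⟩)
    (ρ : Equiv.Perm (Fin r) → (MLam K μ r →ₗ[K] MLam K μ r))
    (hρ : IsTabAction K μ r ρ)
    (hcond : ∀ (c : ℕ) (hc : c + 1 < L) (j : ℕ), 1 ≤ j → j ≤ μ ⟨c+1, hc⟩ →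
      (∑ t ∈ Finset.Icc 1 j,
        (-1:K)^(t-1) * ((μ ⟨c+1, hc⟩ - t).choose (μ ⟨c+1, hc⟩ - kk c) : K) *
          (j.choose t : K) *
          ((μ ⟨c, by omega⟩ - μ ⟨c+1, hc⟩ + j + t).choose t : K)) ≠ 0) :
    IsQuotIso K (sgrSub K μ r kk) (garnirSub K μ r) ρ ρ ∧
      sgrSub K μ r kk = garnirSub K μ r := by
  subst hr
  exact statement13_general K L μ (fun i j => hanti i j) kk (fun c hc => (hk c hc).2) ρ hρ hcond

end Specht
end
end

section
/- Let a ≥ b ≥ k ≥ 1 and let λ = (a,b)' be the conjugate of (a,b) (so λ is the partition of r = a+b whose Young diagram has two columns of lengths a and b). Then M^λ / SGR^λ(k) ≅ S^λ as 𝔖_{a+b}-modules if and only if Σ_{t=1}^{j} (−1)^{t−1} C(b−t, b−k) C(j,t) C(a−b+j+t, t) ≠ 0 for all j = 1,…,b. -/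
set_option synthInstance.maxHeartbeats 1000000
set_option maxSynthPendingDepth 3
set_option maxHeartbeats 1000000

noncomputable section

/-!
Let `λ` have two columns, of lengths `a ≥ b`. Recording the second column of a tableau identifies
`M^λ`, up to signs, with the space of functions on the `b`-subsets of an `(a + b)`-set. The Garnir
relations become the span of the indicator functions of the stars `{Y | Z ⊆ Y}` with `#Z < b`, which
is the sum of all but the last eigenspace of the Johnson scheme. The symmetrized Garnir relations
become the columns of a symmetric matrix in the Bose-Mesner algebra of the scheme. This matrix is
triangular in the stars, and its diagonal entries for `#Z = b - j` are the `j`-th sum of the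
criterion. If none of these sums vanishes, the columns span the Garnir space. If the `j`-th sum
vanishes, the matrix kills a vector `w` of the Garnir space with `w ⬝ᵥ w ≠ 0`, an analogue of a
polytabloid; by symmetry `w` is orthogonal to all columns, so that `w` is not in their span.
Finally, the symmetrized relations lie in the Garnir space, so by dimension the quotients are
isomorphic only if the two spaces agree.
-/

namespace Johnson

open Finset
open Matrix (of)
open scoped Matrix

section Counting

variable {α : Type*}

lemma card_filter_subset_powersetCard [DecidableEq α] {X W : Finset α} (hX : X ⊆ W) {n : ℕ}
    (hn : n ≤ #W) : #{D ∈ W.powersetCard n | X ⊆ D} = (#W - #X).choose (#W - n) := by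
  have hXW := card_le_card hX
  rcases le_or_gt #X n with h | h
  · rw [card_filter_powersetCard_subset X W n hX h]
    exact Nat.choose_symm_of_eq_add (by lia)
  · rw [Nat.choose_eq_zero_of_lt (by lia), card_eq_zero, filter_eq_empty_iff]
    intro D hD hXD
    exact h.not_ge ((card_le_card hXD).trans (mem_powersetCard.mp hD).2.le)

lemma choose_card_add_eq_sum_powerset (S : Finset α) (q : ℕ) {a : ℕ} (hS : #S ≤ a) :
    (#S + q).choose a = ∑ X ∈ S.powerset, q.choose (a - #X) := by
  rw [sum_powerset_apply_card (fun n => q.choose (a - n)), Nat.add_choose_eq,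
    Nat.sum_antidiagonal_eq_sum_range_succ fun i j => (#S).choose i * q.choose j]
  refine (sum_subset (by simpa using hS) fun i _ hi => ?_).symm
  rw [Nat.choose_eq_zero_of_lt (by simpa using hi), zero_mul]

lemma sum_coe_powersetCard [Fintype α] {M : Type*} [AddCommMonoid M] (b : ℕ)
    (f : Finset α → M) : ∑ Y : Set.powersetCard α b, f Y = ∑ Y ∈ powersetCard b univ, f Y :=
  (sum_subtype _ (by simp) f).symm

open Polynomial in
lemma sum_range_neg_one_pow_mul_choose_mul_choose (R : Type*) [CommRing R] {s n : ℕ} (hs : s ≤ n)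
    (q : ℕ) :
    ∑ u ∈ range (n + 1), (-1) ^ (u - q) * ((s.choose u * u.choose q : ℕ) : R) =
      if s = q then 1 else 0 := by
  -- Compare the coefficients of `X ^ q` in `X ^ s = ((X - 1) + 1) ^ s`.
  have h : ((X : R[X]) ^ s).coeff q = ((X + C (-1) + 1 : R[X]) ^ s).coeff q := by simp
  simp only [add_pow (X + C (-1) : R[X]), coeff_X_pow, finsetSum_coeff, one_pow, mul_one,
    coeff_mul_natCast, coeff_X_add_C_pow] at h
  rw [← sum_subset (range_subset_range.mpr (Nat.succ_le_succ hs))]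
  · simp only [@eq_comm _ s q, h]
    exact sum_congr rfl fun u _ => by push_cast; ring
  · intro u _ hu
    simp [Nat.choose_eq_zero_of_lt (show s < u by simpa using hu)]

end Counting

section Transversal

variable {α ι : Type*} [Fintype ι]

/-- The choice of the point `v (i, c i)` from the `i`-th of the disjoint pairs
`{v (i, 1), v (i, -1)}`, for each `i`. -/
def transversal (v : ι × ℤˣ ↪ α) (c : ι → ℤˣ) : Finset α :=
  univ.map ⟨fun i => v (i, c i), fun _ _ h => congrArg Prod.fst (v.injective h)⟩

lemma mem_transversal {v : ι × ℤˣ ↪ α} {c : ι → ℤˣ} {x : α} :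
    x ∈ transversal v c ↔ ∃ i, v (i, c i) = x := by
  simp only [transversal, mem_map, mem_univ, true_and]
  rfl

lemma card_transversal (v : ι × ℤˣ ↪ α) (c : ι → ℤˣ) : #(transversal v c) = Fintype.card ι := by
  simp [transversal]

lemma exists_forall_apply_notMem (v : ι × ℤˣ ↪ α) {X : Finset α} (hX : #X < Fintype.card ι) :
    ∃ i, ∀ ε, v (i, ε) ∉ X := by
  by_contra! h
  choose c hc using h
  refine hX.not_ge ?_
  rw [← card_transversal v c]
  refine card_le_card fun x hx => ?_
  obtain ⟨i, rfl⟩ := mem_transversal.mp hx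
  exact hc i

lemma sum_prod_smul_ite_subset_transversal [DecidableEq α] [DecidableEq ι] (v : ι × ℤˣ ↪ α)
    {X : Finset α} (hX : #X < Fintype.card ι) {M : Type*} [AddCommGroup M] (x : M) :
    ∑ c : ι → ℤˣ, ((∏ i, c i : ℤˣ) : ℤ) • (if X ⊆ transversal v c then x else 0) = 0 := by
  -- Some pair misses `X`, and exchanging its two points is a sign-reversing involution.
  obtain ⟨i, hi⟩ := exists_forall_apply_notMem v hX
  have hflip (c : ι → ℤˣ) :
      X ⊆ transversal v (Pi.mulSingle i (-1) * c) ↔ X ⊆ transversal v c := by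
    refine forall₂_congr fun y hy => ?_
    simp only [mem_transversal]
    refine exists_congr fun j => ?_
    rcases eq_or_ne j i with rfl | hj
    · exact iff_of_false (fun h => hi _ (h ▸ hy)) (fun h => hi _ (h ▸ hy))
    · simp [hj]
  refine sum_involution (fun c _ => Pi.mulSingle i (-1) * c) (fun c _ => ?_) (fun c _ _ h => ?_)
    (fun _ _ => mem_univ _) fun c _ => ?_
  · have hsign : ∏ j, (Pi.mulSingle i (-1) * c : ι → ℤˣ) j = -∏ j, c j := by
      simp [prod_mul_distrib]
    simp only [hflip, hsign, Units.val_neg, neg_smul, add_neg_cancel]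
  · simpa using congrFun h i
  · rw [← mul_assoc, ← Pi.mulSingle_mul]
    simp

end Transversal

variable {α : Type*} [DecidableEq α]

variable (K : Type*) {b : ℕ}

section CommRing

variable [CommRing K]

/-- The indicator function of the `b`-subsets containing `Z`. -/
def starVec (b : ℕ) (Z : Finset α) : Set.powersetCard α b → K :=
  fun W => if Z ⊆ W then 1 else 0

/-- The span of the vectors `starVec K b Z` with `#Z < m`. In the Johnson scheme it is the sum of
the first `m` eigenspaces. -/
def starSpan (α : Type*) [DecidableEq α] (b m : ℕ) : Submodule K (Set.powersetCard α b → K) :=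
  Submodule.span K {f | ∃ Z : Finset α, #Z < m ∧ f = starVec K b Z}

/-- The matrix counting the common `(b - t)`-subsets of two `b`-subsets. -/
def commonSubsets (α : Type*) [DecidableEq α] (b t : ℕ) :
    Matrix (Set.powersetCard α b) (Set.powersetCard α b) K :=
  of fun W Y => ((#(W ∩ Y : Finset α)).choose (b - t) : K)

/-- The adjacency matrix of the `k`-th relation of the Johnson scheme: two `b`-subsets are related
if they have `b - k` elements in common. -/
def johnsonMatrix (α : Type*) [DecidableEq α] (b k : ℕ) :
    Matrix (Set.powersetCard α b) (Set.powersetCard α b) K :=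
  of fun W Y => if #(W ∩ Y : Finset α) + k = b then 1 else 0

/-- The matrix of the symmetrized Garnir relations: under the identification of `b`-subsets with
column tabloids, column `Y` is the relation of the tabloid with second column `Y`, the sign
`(-1) ^ k` being that of an exchange of `k` pairs of entries. -/
def sgrMatrix (α : Type*) [DecidableEq α] (b k : ℕ) :
    Matrix (Set.powersetCard α b) (Set.powersetCard α b) K :=
  (b.choose k : K) • 1 - (-1 : K) ^ k • johnsonMatrix K α b k

/-- The coefficient of `starVec K b X`, `#X = n`, in the image of `starVec K b Z`, `#Z = m`, under
`sgrMatrix K α b k`, where `#α = a + b`. -/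
def sgrCoeff (a b k m n : ℕ) : K :=
  ∑ t ∈ Icc 1 b, (-1) ^ (t - 1) * ((b - t).choose (b - k) : K) *
    (((a + t - m).choose (a - n) * (b - n).choose t : ℕ) : K)

/-- The `j`-th sum in the criterion; it is the eigenvalue of `sgrMatrix K α b k` on the eigenspace
of the Johnson scheme indexed by `b - j`, where `#α = a + b`. -/
def sgrEigenvalue (a b k j : ℕ) : K :=
  ∑ t ∈ Icc 1 j, (-1) ^ (t - 1) * ((b - t).choose (b - k) : K) * (j.choose t : K) *
    ((a - b + j + t).choose t : K)

variable {K}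

lemma starVec_mem_starSpan {m : ℕ} {Z : Finset α} (h : #Z < m) :
    starVec K b Z ∈ starSpan K α b m :=
  Submodule.subset_span ⟨Z, h, rfl⟩

lemma sum_starVec [Fintype α] {a : ℕ} (hα : Fintype.card α = a + b) (S : Finset α) :
    ∑ Y, starVec K b S Y = ((a + b - #S).choose a : K) := by
  simp only [starVec]
  rw [sum_coe_powersetCard b fun Y => if S ⊆ Y then (1 : K) else 0, sum_boole,
    card_filter_subset_powersetCard (subset_univ S) (by rw [card_univ]; lia), card_univ, hα,
    Nat.add_sub_cancel]

lemma commonSubsets_apply_eq_sum (t : ℕ) (W Y : Set.powersetCard α b) :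
    commonSubsets K α b t W Y = ∑ D ∈ powersetCard (b - t) (W : Finset α), starVec K b D Y := by
  simp only [commonSubsets, Matrix.of_apply, starVec, sum_boole, ← card_powersetCard]
  congr 2
  ext D
  simp only [mem_powersetCard, mem_filter, subset_inter_iff]
  tauto

lemma starVec_union (D Z : Finset α) : starVec K b (D ∪ Z) = starVec K b D * starVec K b Z := by
  ext Y
  simp only [starVec, union_subset_iff, Pi.mul_apply, mul_ite, mul_one, mul_zero, ← ite_and,
    and_comm]

theorem commonSubsets_mulVec_starVec [Fintype α] {a : ℕ} (hα : Fintype.card α = a + b) {t : ℕ}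
    (ht : t ≤ b) {Z : Finset α} (hZ : #Z ≤ a) :
    commonSubsets K α b t *ᵥ starVec K b Z = ∑ X ∈ Z.powerset,
      (((a + t - #Z).choose (a - #X) * (b - #X).choose t : ℕ) : K) • starVec K b X := by
  ext W
  have hcount (D : Finset α) (hD : D ∈ powersetCard (b - t) (W : Finset α)) :
      ∑ Y, starVec K b (D ∪ Z) Y =
        ∑ X ∈ Z.powerset, if X ⊆ D then ((a + t - #Z).choose (a - #X) : K) else 0 := by
    have hcard : a + b - #(D ∪ Z) = #(D ∩ Z) + (a + t - #Z) := by
      have := card_union_add_card_inter D Z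
      have := card_le_card (inter_subset_right : D ∩ Z ⊆ Z)
      have := (mem_powersetCard.mp hD).2
      lia
    rw [sum_starVec hα, hcard, choose_card_add_eq_sum_powerset _ _
      ((card_le_card inter_subset_right).trans hZ), Nat.cast_sum, ← sum_filter]
    congr 1
    ext X
    simp only [mem_powerset, mem_filter, subset_inter_iff, and_comm]
  have hchoose (X : Finset α) :
      ∑ D ∈ powersetCard (b - t) (W : Finset α), (if X ⊆ D then (1 : K) else 0) =
        (b - #X).choose t * starVec K b X W := by
    rw [sum_boole]
    by_cases hX : X ⊆ (W : Finset α)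
    · rw [card_filter_subset_powersetCard hX (by rw [Set.powersetCard.card_eq W]; lia),
        Set.powersetCard.card_eq W, Nat.sub_sub_self ht, starVec, if_pos hX, mul_one]
    · rw [filter_false_of_mem fun D hD hXD => hX (hXD.trans (mem_powersetCard.mp hD).1)]
      simp [starVec, hX]
  calc (commonSubsets K α b t *ᵥ starVec K b Z) W
      = ∑ D ∈ powersetCard (b - t) (W : Finset α), ∑ Y, starVec K b (D ∪ Z) Y := by
        simp only [Matrix.mulVec, dotProduct, commonSubsets_apply_eq_sum, sum_mul, starVec_union,
          Pi.mul_apply]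
        exact sum_comm
    _ = ∑ X ∈ Z.powerset, ((a + t - #Z).choose (a - #X) : K) *
          ∑ D ∈ powersetCard (b - t) (W : Finset α), if X ⊆ D then (1 : K) else 0 := by
        rw [sum_congr rfl hcount, sum_comm]
        simp only [mul_sum, mul_ite, mul_one, mul_zero]
    _ = _ := by
        simp only [hchoose, Finset.sum_apply, Pi.smul_apply, smul_eq_mul, Nat.cast_mul, mul_assoc]

theorem johnsonMatrix_eq_sum {k : ℕ} (hk : k ≤ b) : johnsonMatrix K α b k =
    ∑ t ∈ range (b + 1), ((-1) ^ (t + k) * ((b - t).choose (b - k) : K)) •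
      commonSubsets K α b t := by
  ext W Y
  have hs : #(W ∩ Y : Finset α) ≤ b :=
    (card_le_card inter_subset_left).trans (Set.powersetCard.card_eq W).le
  have hq : #(W ∩ Y : Finset α) + k = b ↔ #(W ∩ Y : Finset α) = b - k := by lia
  rw [johnsonMatrix, Matrix.of_apply, if_congr hq rfl rfl,
    ← sum_range_neg_one_pow_mul_choose_mul_choose K hs, ← sum_range_reflect, Matrix.sum_apply]
  refine sum_congr rfl fun t ht => ?_
  rw [Nat.add_sub_cancel, Matrix.smul_apply, commonSubsets, Matrix.of_apply, smul_eq_mul]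
  rcases le_or_gt t k with h | h
  · have hsign : (-1 : K) ^ (b - t - (b - k)) = (-1) ^ (t + k) :=
      neg_one_pow_congr (by simp only [Nat.even_iff]; lia)
    rw [hsign]
    push_cast
    ring
  · rw [Nat.choose_eq_zero_of_lt (show b - t < b - k by have := mem_range.mp ht; lia)]
    simp

lemma commonSubsets_zero : commonSubsets K α b 0 = 1 := by
  ext W Y
  rw [commonSubsets, Matrix.of_apply, Nat.sub_zero, Matrix.one_apply]
  split_ifs with h
  · rw [h, inter_self, Set.powersetCard.card_eq, Nat.choose_self, Nat.cast_one]
  · rw [Nat.choose_eq_zero_of_lt, Nat.cast_zero]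
    have hWY : (W ∩ Y : Finset α) ⊂ W :=
      inter_subset_left.ssubset_of_ne fun hWY =>
        h (Set.powersetCard.eq_iff_subset.mpr (inter_eq_left.mp hWY))
    exact (card_lt_card hWY).trans_eq (Set.powersetCard.card_eq W)

theorem sgrMatrix_eq_sum {k : ℕ} (hk : k ≤ b) : sgrMatrix K α b k =
    ∑ t ∈ Icc 1 b, ((-1) ^ (t - 1) * ((b - t).choose (b - k) : K)) • commonSubsets K α b t := by
  rw [sgrMatrix, johnsonMatrix_eq_sum hk, range_eq_Ico, sum_eq_sum_Ico_succ_bot b.succ_pos,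
    commonSubsets_zero, zero_add, Nat.sub_zero, Nat.choose_symm hk, smul_add, smul_smul, zero_add,
    ← mul_assoc, ← mul_pow, neg_one_mul, neg_neg, one_pow, one_mul, sub_add_cancel_left, smul_sum,
    ← sum_neg_distrib]
  refine sum_congr rfl fun t ht => ?_
  have hsign : -((-1 : K) ^ k * (-1) ^ (t + k)) = (-1) ^ (t - 1) := by
    obtain ⟨t, rfl⟩ : ∃ u, t = u + 1 := ⟨t - 1, by have := mem_Ico.mp ht; lia⟩
    rw [← pow_add, Nat.add_sub_cancel, ← neg_one_mul, ← pow_succ']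
    exact neg_one_pow_congr (by simp only [Nat.even_iff]; lia)
  rw [smul_smul, ← neg_smul, ← mul_assoc, ← neg_mul, hsign]

theorem sgrMatrix_mulVec_starVec [Fintype α] {a k : ℕ} (hα : Fintype.card α = a + b) (hk : k ≤ b)
    {Z : Finset α} (hZ : #Z ≤ a) :
    sgrMatrix K α b k *ᵥ starVec K b Z =
      ∑ X ∈ Z.powerset, sgrCoeff K a b k #Z #X • starVec K b X := by
  simp only [sgrCoeff, sum_smul]
  rw [sgrMatrix_eq_sum hk, Matrix.sum_mulVec, sum_comm]
  refine sum_congr rfl fun t ht => ?_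
  rw [Matrix.smul_mulVec, commonSubsets_mulVec_starVec hα (mem_Icc.mp ht).2 hZ, smul_sum]
  simp only [smul_smul]

lemma sgrCoeff_self {a k m : ℕ} (hba : b ≤ a) (hm : m ≤ b) :
    sgrCoeff K a b k m m = sgrEigenvalue K a b k (b - m) := by
  symm
  refine (sum_subset (Icc_subset_Icc_right (Nat.sub_le b m)) fun t ht hts => ?_).trans
    (sum_congr rfl fun t _ => ?_)
  · rw [Nat.choose_eq_zero_of_lt (show b - m < t by simp only [mem_Icc] at ht hts; lia)]
    simp
  · have : (a - b + (b - m) + t).choose t = (a + t - m).choose (a - m) := by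
      rw [show a - b + (b - m) + t = a + t - m by lia]
      exact Nat.choose_symm_of_eq_add (by lia)
    rw [this]
    push_cast
    ring

lemma sgrMatrix_transpose (k : ℕ) : (sgrMatrix K α b k)ᵀ = sgrMatrix K α b k := by
  ext W Y
  simp [sgrMatrix, johnsonMatrix, Matrix.one_apply, inter_comm, eq_comm]

section Alternating

variable {ι : Type*} [Fintype ι] [DecidableEq ι]

variable (K) in
/-- The signed sum of the vectors `starVec K b Z` over the transversals `Z` of a family of disjoint
pairs: the analogue of a polytabloid of a two-row shape. With `m` pairs it is an eigenvector in the
`m`-th eigenspace of the Johnson scheme. -/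
def altStarVec (b : ℕ) (v : ι × ℤˣ ↪ α) : Set.powersetCard α b → K :=
  ∑ c : ι → ℤˣ, ((∏ i, c i : ℤˣ) : ℤ) • starVec K b (transversal v c)

theorem map_altStarVec [Finite α] {φ : (Set.powersetCard α b → K) →ₗ[K] Set.powersetCard α b → K}
    {e : ℕ → K} (v : ι × ℤˣ ↪ α)
    (hφ : ∀ Z : Finset α, #Z = Fintype.card ι →
      φ (starVec K b Z) = ∑ X ∈ Z.powerset, e #X • starVec K b X) :
    φ (altStarVec K b v) = e (Fintype.card ι) • altStarVec K b v := by
  cases nonempty_fintype α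
  have hsplit (c : ι → ℤˣ) : φ (starVec K b (transversal v c)) =
      e (Fintype.card ι) • starVec K b (transversal v c) +
        ∑ X : Finset α with #X < Fintype.card ι,
          if X ⊆ transversal v c then e #X • starVec K b X else 0 := by
    rw [hφ _ (card_transversal v c), ← add_sum_erase _ _ (mem_powerset_self _), card_transversal,
      ← sum_filter, filter_filter]
    congr 2
    ext X
    simp only [mem_erase, mem_powerset, mem_filter_univ]
    rw [← card_transversal v c]
    exact ⟨fun h => ⟨card_lt_card (h.2.ssubset_of_ne h.1), h.2⟩,
      fun h => ⟨fun hX => h.1.ne (congrArg card hX), h.2⟩⟩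
  have hlower : ∑ c : ι → ℤˣ, ((∏ i, c i : ℤˣ) : ℤ) •
      ∑ X : Finset α with #X < Fintype.card ι,
        (if X ⊆ transversal v c then e #X • starVec K b X else 0) = 0 := by
    simp only [smul_sum]
    rw [sum_comm]
    exact sum_eq_zero fun X hX =>
      sum_prod_smul_ite_subset_transversal v (by simpa using hX) _
  simp only [altStarVec, map_sum, map_zsmul, hsplit, smul_add, sum_add_distrib]
  rw [hlower, add_zero, smul_sum]
  simp only [smul_comm (e _)]

lemma altStarVec_mem_starSpan (v : ι × ℤˣ ↪ α) {m : ℕ} (hm : Fintype.card ι < m) :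
    altStarVec K b v ∈ starSpan K α b m :=
  sum_mem fun c _ => zsmul_mem (starVec_mem_starSpan (by rwa [card_transversal])) _

lemma altStarVec_apply_eq_one (v : ι × ℤˣ ↪ α) {Y : Set.powersetCard α b}
    (hpos : transversal v 1 ⊆ Y) (hneg : Disjoint (transversal v (-1)) (Y : Finset α)) :
    altStarVec K b v Y = 1 := by
  rw [altStarVec, Finset.sum_apply, Fintype.sum_eq_single 1]
  · simp [starVec, hpos]
  · intro c hc
    obtain ⟨i, hi⟩ := Function.ne_iff.mp hc
    have hci : c i = -1 := (Int.units_eq_one_or _).resolve_left hi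
    have hnot : ¬transversal v c ⊆ Y := fun h =>
      disjoint_left.mp hneg (mem_transversal.mpr ⟨i, rfl⟩)
        (h (mem_transversal.mpr ⟨i, by rw [hci]; rfl⟩))
    simp [starVec, hnot]

lemma altStarVec_dotProduct_self_ne_zero [CharZero K] [Fintype α] {a : ℕ}
    (hα : Fintype.card α = a + b) (v : ι × ℤˣ ↪ α) (ha : Fintype.card ι ≤ a)
    (hb : Fintype.card ι ≤ b) : altStarVec K b v ⬝ᵥ altStarVec K b v ≠ 0 := by
  have hcast : altStarVec K b v = Int.castRingHom K ∘ altStarVec ℤ b v := by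
    ext Y
    simp [altStarVec, starVec, apply_ite]
  have hdisj : Disjoint (transversal v 1) (transversal v (-1)) := by
    simp only [disjoint_left, mem_transversal]
    rintro _ ⟨i, rfl⟩ ⟨j, h⟩
    simpa using congrArg Prod.snd (v.injective h)
  obtain ⟨Y, hpos, hneg, hY⟩ := exists_subsuperset_card_eq (n := b)
    (subset_compl_iff_disjoint_right.mpr hdisj) (by rwa [card_transversal])
    (by rw [card_compl, card_transversal]; lia)
  have hone := altStarVec_apply_eq_one (K := ℤ) (Y := Set.powersetCard.ofCard hY) v hpos
    (subset_compl_iff_disjoint_left.mp hneg)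
  rw [hcast, ← RingHom.map_dotProduct, eq_intCast, Int.cast_ne_zero, Ne, dotProduct_self_eq_zero]
  exact fun h => one_ne_zero (hone.symm.trans (congrFun h _))

end Alternating

lemma starVec_eq_single (Y : Set.powersetCard α b) :
    starVec K b (Y : Finset α) = Pi.single Y 1 := by
  ext W
  simp only [starVec, Pi.single_apply, ← Set.powersetCard.eq_iff_subset, eq_comm]

section Range

variable [Fintype α] {a k : ℕ}

lemma range_mulVecLin_eq_span_starVec
    (A : Matrix (Set.powersetCard α b) (Set.powersetCard α b) K) :
    LinearMap.range A.mulVecLin =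
      Submodule.span K (Set.range fun Y : Set.powersetCard α b => A *ᵥ starVec K b Y) := by
  simp only [Matrix.range_mulVecLin, starVec_eq_single, Matrix.mulVec_single_one]

lemma range_sgrMatrix_le (hα : Fintype.card α = a + b) (hba : b ≤ a) (hk : k ≤ b) :
    LinearMap.range (sgrMatrix K α b k).mulVecLin ≤ starSpan K α b b := by
  rw [range_mulVecLin_eq_span_starVec, Submodule.span_le]
  rintro _ ⟨Y, rfl⟩
  have hY := Set.powersetCard.card_eq Y
  have htop : sgrCoeff K a b k #(Y : Finset α) #(Y : Finset α) = 0 := by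
    rw [hY, sgrCoeff_self hba le_rfl, Nat.sub_self]
    simp [sgrEigenvalue]
  simp only [sgrMatrix_mulVec_starVec hα hk (hY.trans_le hba)]
  rw [← add_sum_erase _ _ (mem_powerset_self _), htop, zero_smul, zero_add]
  refine sum_mem fun X hX => Submodule.smul_mem _ _ (starVec_mem_starSpan ?_)
  have hXY := (mem_powerset.mp (mem_of_mem_erase hX)).ssubset_of_ne (ne_of_mem_erase hX)
  exact (card_lt_card hXY).trans_eq hY

lemma exists_mem_starSpan_mulVec_eq_smul [CharZero K] (hα : Fintype.card α = a + b) (hba : b ≤ a)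
    (hk : k ≤ b) {m : ℕ} (hm : m < b) :
    ∃ w ∈ starSpan K α b b, w ⬝ᵥ w ≠ 0 ∧
      sgrMatrix K α b k *ᵥ w = sgrEigenvalue K a b k (b - m) • w := by
  have hcard : Fintype.card (Fin m × ℤˣ) ≤ Fintype.card α := by
    rw [Fintype.card_prod, Fintype.card_fin, Fintype.card_units_int, hα]
    lia
  obtain ⟨v⟩ := Function.Embedding.nonempty_of_card_le hcard
  refine ⟨altStarVec K b v, altStarVec_mem_starSpan v (by simpa using hm),
    altStarVec_dotProduct_self_ne_zero hα v (by simpa using hm.le.trans hba)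
      (by simpa using hm.le), ?_⟩
  have := map_altStarVec (φ := (sgrMatrix K α b k).mulVecLin) (e := sgrCoeff K a b k m) v
    fun Z hZ => by
      rw [Fintype.card_fin] at hZ
      rw [Matrix.mulVecLin_apply, sgrMatrix_mulVec_starVec hα hk (by lia), hZ]
  rwa [Matrix.mulVecLin_apply, Fintype.card_fin, sgrCoeff_self hba hm.le] at this

end Range

section Exchange

variable (K) in
/-- The indicator function of the `b`-subsets that contain `D` and are disjoint from `B`. -/
def intervalVec (b : ℕ) (D B : Finset α) : Set.powersetCard α b → K :=
  fun W => if D ⊆ (W : Finset α) ∧ Disjoint B W then 1 else 0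

lemma intervalVec_eq_sum (D B : Finset α) :
    intervalVec K b D B = ∑ S ∈ B.powerset, (-1 : K) ^ #S • starVec K b (D ∪ S) := by
  ext W
  have hsum : ∑ S ∈ B.powerset, (-1 : K) ^ #S * starVec K b S W =
      if Disjoint B (W : Finset α) then 1 else 0 := by
    have h := congrArg (Int.cast : ℤ → K) (sum_powerset_neg_one_pow_card (x := B ∩ W))
    push_cast at h
    rw [if_congr disjoint_iff_inter_eq_empty rfl rfl, ← h]
    simp only [starVec, mul_ite, mul_one, mul_zero, ← sum_filter]
    congr 1
    ext S
    simp only [mem_filter, mem_powerset, subset_inter_iff]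
  simp only [Finset.sum_apply, Pi.smul_apply, smul_eq_mul, starVec_union, Pi.mul_apply,
    mul_left_comm _ (starVec K b D W), ← mul_sum, hsum]
  simp only [intervalVec, starVec, ← ite_and, mul_ite, mul_one, mul_zero, and_comm]

lemma intervalVec_sub_starVec_mem_starSpan (D B : Finset α) :
    intervalVec K b D B - (-1 : K) ^ #B • starVec K b (D ∪ B) ∈ starSpan K α b (#D + #B) := by
  rw [intervalVec_eq_sum, ← add_sum_erase _ _ (mem_powerset_self B), add_sub_cancel_left]
  refine sum_mem fun S hS => Submodule.smul_mem _ _ (starVec_mem_starSpan ?_)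
  have hSB := (mem_powerset.mp (mem_of_mem_erase hS)).ssubset_of_ne (ne_of_mem_erase hS)
  exact (card_union_le D S).trans_lt (Nat.add_lt_add_left (card_lt_card hSB) _)

lemma intervalVec_singleton (D : Finset α) (y : α) :
    intervalVec K b D {y} = starVec K b D - starVec K b (insert y D) := by
  rw [intervalVec_eq_sum, ← insert_empty_eq, sum_powerset_insert (notMem_empty y), powerset_empty,
    sum_singleton, sum_singleton, insert_empty_eq, union_singleton]
  simp [sub_eq_add_neg]

lemma sdiff_subset_and_disjoint_iff {B W Y : Finset α} (hB : B ⊆ Y) :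
    Y \ B ⊆ W ∧ Disjoint B W ↔ Y \ W = B := by
  rw [sdiff_le_comm]
  exact ⟨fun h => h.1.antisymm (subset_sdiff.mpr ⟨hB, h.2⟩),
    fun h => ⟨h.subset, h ▸ sdiff_disjoint⟩⟩

lemma sdiff_union_subset_iff {A B W Y : Finset α} (hWY : #W = #Y) (hB : B ⊆ Y)
    (hA : Disjoint A Y) (hAB : #A = #B) :
    Y \ B ∪ A ⊆ W ↔ (Y \ B ⊆ W ∧ Disjoint B W) ∧ W \ Y = A := by
  have hcard : #(Y \ B ∪ A) = #Y := by
    rw [card_union_of_disjoint (hA.symm.mono_left sdiff_subset), card_sdiff_of_subset hB, hAB,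
      Nat.sub_add_cancel (card_le_card hB)]
  refine ⟨fun h => ?_, fun h => union_subset h.1.1 (h.2 ▸ sdiff_subset)⟩
  obtain rfl := eq_of_subset_of_card_le h (hWY.trans hcard.symm).le
  refine ⟨⟨subset_union_left, ?_⟩, ?_⟩
  · exact disjoint_union_right.mpr ⟨disjoint_sdiff, (hA.mono_right hB).symm⟩
  · rw [union_sdiff_distrib, sdiff_eq_empty_iff_subset.mpr sdiff_subset, empty_union,
      sdiff_eq_self_of_disjoint hA]

lemma sum_intervalVec_apply (Y W : Set.powersetCard α b) (k : ℕ) :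
    ∑ B ∈ powersetCard k (Y : Finset α), intervalVec K b (↑Y \ B) B W =
      johnsonMatrix K α b k W Y := by
  have hterm (B : Finset α) (hB : B ∈ powersetCard k (Y : Finset α)) :
      intervalVec K b (↑Y \ B) B W = if (Y \ W : Finset α) = B then 1 else 0 :=
    if_congr (sdiff_subset_and_disjoint_iff (mem_powersetCard.mp hB).1) rfl rfl
  have hcard : #(Y \ W : Finset α) = k ↔ #(W ∩ Y : Finset α) + k = b := by
    have := card_sdiff_add_card_inter (Y : Finset α) W
    rw [Set.powersetCard.card_eq, inter_comm] at this
    lia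
  rw [sum_congr rfl hterm, sum_ite_eq, johnsonMatrix, Matrix.of_apply]
  simp only [mem_powersetCard, sdiff_subset, true_and, hcard]

variable [Fintype α]

lemma sum_starVec_exchange (Y : Set.powersetCard α b) {B : Finset α} (hB : B ⊆ (Y : Finset α)) :
    ∑ A ∈ powersetCard #B (Y : Finset α)ᶜ, starVec K b (↑Y \ B ∪ A) =
      intervalVec K b (Y \ B) B := by
  ext W
  have hWY : #(W : Finset α) = #(Y : Finset α) := by simp only [Set.powersetCard.card_eq]
  have hterm (A : Finset α) (hA : A ∈ powersetCard #B (Y : Finset α)ᶜ) :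
      starVec K b (↑Y \ B ∪ A) W =
        if ((Y : Finset α) \ B ⊆ W ∧ Disjoint B (W : Finset α)) ∧ (W \ Y : Finset α) = A
          then 1 else 0 := by
    obtain ⟨hAY, hAB⟩ := mem_powersetCard.mp hA
    simp only [starVec, sdiff_union_subset_iff hWY hB (subset_compl_iff_disjoint_right.mp hAY) hAB]
  rw [Finset.sum_apply, sum_congr rfl hterm]
  simp only [ite_and _ (_ = _), sum_ite_irrel, sum_ite_eq, sum_const_zero, intervalVec]
  refine if_ctx_congr Iff.rfl (fun h => if_pos ?_) fun _ => rfl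
  rw [mem_powersetCard, card_sdiff_comm hWY, (sdiff_subset_and_disjoint_iff hB).mp h]
  exact ⟨subset_compl_iff_disjoint_right.mpr sdiff_disjoint, rfl⟩

theorem sgrMatrix_mulVec_starVec_eq_sum_exchange (Y : Set.powersetCard α b) (k : ℕ) :
    sgrMatrix K α b k *ᵥ starVec K b Y = (b.choose k : K) • starVec K b Y -
      (-1 : K) ^ k • ∑ B ∈ powersetCard k (Y : Finset α),
        ∑ A ∈ powersetCard k (Y : Finset α)ᶜ, starVec K b (↑Y \ B ∪ A) := by
  have hexchange : ∑ B ∈ powersetCard k (Y : Finset α),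
      ∑ A ∈ powersetCard k (Y : Finset α)ᶜ, starVec K b (↑Y \ B ∪ A) =
        johnsonMatrix K α b k *ᵥ starVec K b Y := by
    ext W
    rw [starVec_eq_single, Matrix.mulVec_single_one, Matrix.col_apply, ← sum_intervalVec_apply,
      Finset.sum_apply]
    refine sum_congr rfl fun B hB => ?_
    obtain ⟨hBY, rfl⟩ := mem_powersetCard.mp hB
    rw [sum_starVec_exchange Y hBY]
  rw [hexchange, sgrMatrix, Matrix.sub_mulVec, Matrix.smul_mulVec, Matrix.smul_mulVec,
    Matrix.one_mulVec]

lemma sum_starVec_insert (Z : Finset α) :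
    ∑ y ∈ Zᶜ, starVec K b (insert y Z) = ((b - #Z : ℕ) : K) • starVec K b Z := by
  ext W
  simp only [Finset.sum_apply, Pi.smul_apply, smul_eq_mul, starVec, insert_subset_iff, ite_and]
  split_ifs with h
  · have hfilter : {y ∈ Zᶜ | y ∈ (W : Finset α)} = (W : Finset α) \ Z := by
      ext y
      simp [and_comm]
    rw [sum_boole, hfilter, card_sdiff_of_subset h, Set.powersetCard.card_eq, mul_one]
  · simp

end Exchange

end CommRing

section Field

variable {K} [Field K]

lemma starSpan_le_range {φ : (Set.powersetCard α b → K) →ₗ[K] Set.powersetCard α b → K}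
    {e : ℕ → ℕ → K} {m : ℕ}
    (hφ : ∀ Z : Finset α, #Z < m →
      φ (starVec K b Z) = ∑ X ∈ Z.powerset, e #Z #X • starVec K b X)
    (he : ∀ i < m, e i i ≠ 0) : starSpan K α b m ≤ LinearMap.range φ := by
  refine Submodule.span_le.mpr ?_
  rintro _ ⟨Z, hZ, rfl⟩
  induction Z using Finset.strongInduction with
  | H Z ih =>
    have htop : e #Z #Z • starVec K b Z =
        φ (starVec K b Z) - ∑ X ∈ Z.powerset.erase Z, e #Z #X • starVec K b X := by
      rw [hφ Z hZ, ← add_sum_erase _ _ (mem_powerset_self Z), add_sub_cancel_right]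
    refine (Submodule.smul_mem_iff _ (he #Z hZ)).mp ?_
    rw [htop]
    refine sub_mem (LinearMap.mem_range_self φ _) (sum_mem fun X hX => Submodule.smul_mem _ _ ?_)
    have hXZ : X ⊂ Z := (mem_powerset.mp (mem_of_mem_erase hX)).ssubset_of_ne (ne_of_mem_erase hX)
    exact ih X hXZ ((card_lt_card hXZ).trans hZ)

theorem range_sgrMatrix_eq_starSpan_iff [CharZero K] [Fintype α] {a k : ℕ}
    (hα : Fintype.card α = a + b) (hba : b ≤ a) (hk : k ≤ b) :
    LinearMap.range (sgrMatrix K α b k).mulVecLin = starSpan K α b b ↔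
      ∀ j, 1 ≤ j → j ≤ b → sgrEigenvalue K a b k j ≠ 0 := by
  refine ⟨fun hrange j hj hjb hzero => ?_, fun h => (range_sgrMatrix_le hα hba hk).antisymm ?_⟩
  · -- A vector `w = A y` killed by the symmetric matrix `A` satisfies `w ⬝ᵥ w = A w ⬝ᵥ y = 0`.
    obtain ⟨w, hw, hww, hAw⟩ :=
      exists_mem_starSpan_mulVec_eq_smul (K := K) hα hba hk (show b - j < b by lia)
    rw [← hrange] at hw
    obtain ⟨y, rfl⟩ := hw
    rw [Nat.sub_sub_self hjb, hzero, zero_smul] at hAw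
    refine hww ?_
    simp only [Matrix.mulVecLin_apply] at hAw ⊢
    rw [Matrix.dotProduct_mulVec, ← Matrix.mulVec_transpose, sgrMatrix_transpose, hAw,
      zero_dotProduct]
  · refine starSpan_le_range (e := sgrCoeff K a b k)
      (fun Z hZ => sgrMatrix_mulVec_starVec hα hk (hZ.le.trans hba)) fun i hi => ?_
    rw [sgrCoeff_self hba hi.le]
    exact h _ (by lia) (Nat.sub_le b i)

theorem starSpan_eq_span_starVec_card [CharZero K] [Finite α] :
    starSpan K α b b =
      Submodule.span K {f | ∃ D : Finset α, #D + 1 = b ∧ f = starVec K b D} := by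
  cases nonempty_fintype α
  refine le_antisymm (Submodule.span_le.mpr ?_) (Submodule.span_mono ?_)
  · rintro _ ⟨Z, hZ, rfl⟩
    obtain ⟨n, hn⟩ := Nat.exists_eq_add_of_lt hZ
    clear hZ
    induction n generalizing Z with
    | zero => exact Submodule.subset_span ⟨Z, hn.symm, rfl⟩
    | succ n ih =>
      have hb : ((b - #Z : ℕ) : K) ≠ 0 := Nat.cast_ne_zero.mpr (by lia)
      rw [SetLike.mem_coe, ← Submodule.smul_mem_iff _ hb, ← sum_starVec_insert]
      refine sum_mem fun y hy => ih _ ?_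
      rw [card_insert_of_notMem (mem_compl.mp hy)]
      lia
  · rintro _ ⟨D, hD, rfl⟩
    exact ⟨D, by lia, rfl⟩

end Field

end Johnson

namespace Specht

open Finset

section Swaps

variable {X : Type*} [DecidableEq X] {k : ℕ}

/-- The product of the transpositions exchanging `p i` and `q i`. -/
def swaps (p q : Fin k → X) : Equiv.Perm X :=
  (List.ofFn fun i => Equiv.swap (p i) (q i)).prod

lemma swaps_succ (p q : Fin (k + 1) → X) :
    swaps p q = Equiv.swap (p 0) (q 0) * swaps (fun i => p i.succ) (fun i => q i.succ) := by
  simp [swaps, List.ofFn_succ]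

lemma swaps_apply_of_ne {p q : Fin k → X} {x : X} (hp : ∀ i, x ≠ p i) (hq : ∀ i, x ≠ q i) :
    swaps p q x = x := by
  induction k with
  | zero => simp [swaps]
  | succ k ih =>
    rw [swaps_succ, Equiv.Perm.mul_apply, ih (fun i => hp _) (fun i => hq _),
      Equiv.swap_apply_of_ne_of_ne (hp 0) (hq 0)]

lemma swaps_apply_right {p q : Fin k → X} (hp : Function.Injective p)
    (hq : Function.Injective q) (hpq : ∀ i j, p i ≠ q j) (i : Fin k) :
    swaps p q (q i) = p i := by
  induction k with
  | zero => exact i.elim0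
  | succ k ih =>
    rw [swaps_succ, Equiv.Perm.mul_apply]
    cases i using Fin.cases with
    | zero =>
      rw [swaps_apply_of_ne (fun i => (hpq _ _).symm) (fun i => hq.ne (Fin.succ_ne_zero i).symm),
        Equiv.swap_apply_right]
    | succ i =>
      rw [ih (p := fun i => p i.succ) (q := fun i => q i.succ) (hp.comp (Fin.succ_injective k))
          (hq.comp (Fin.succ_injective k)) (fun i j => hpq _ _),
        Equiv.swap_apply_of_ne_of_ne (hp.ne (Fin.succ_ne_zero i)) (hpq _ _)]

lemma sign_swaps [Fintype X] {p q : Fin k → X} (hpq : ∀ i, p i ≠ q i) :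
    Equiv.Perm.sign (swaps p q) = (-1) ^ k := by
  rw [swaps, Equiv.Perm.sign_prod_list_swap, List.length_ofFn]
  rintro _ h
  obtain ⟨i, rfl⟩ := (List.mem_ofFn' _ _).mp h
  exact ⟨p i, q i, hpq i, rfl⟩

end Swaps

variable {L : ℕ} {μ : Fin L → ℕ} {r : ℕ}

section Columns

/-- Column `c` of the tableau `T`, read from top to bottom. -/
def column (T : Tab μ r) (c : Fin L) : Fin (μ c) ↪ Fin r :=
  (Function.Embedding.sigmaMk c).trans T.toEmbedding

/-- The set of entries of column `c` of the tableau `T`. -/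
def columnEntries (T : Tab μ r) (c : Fin L) : Set.powersetCard (Fin r) (μ c) :=
  Set.powersetCard.ofCard (s := univ.map (column T c)) (by simp)

@[simp]
lemma column_apply (T : Tab μ r) (c : Fin L) (i : Fin (μ c)) : column T c i = T ⟨c, i⟩ := rfl

lemma coe_columnEntries (T : Tab μ r) (c : Fin L) :
    (columnEntries T c : Finset (Fin r)) = univ.map (column T c) := rfl

lemma mem_columnEntries {T : Tab μ r} {c : Fin L} {y : Fin r} :
    y ∈ (columnEntries T c : Finset (Fin r)) ↔ (T.symm y).1 = c := by
  rw [coe_columnEntries, mem_map]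
  constructor
  · rintro ⟨j, -, rfl⟩
    simp
  · rintro rfl
    exact ⟨(T.symm y).2, mem_univ _, by simp⟩

lemma columnEntries_trans {T : Tab μ r} {π : Equiv.Perm (Cell μ)} (hπ : ∀ x, (π x).1 = x.1)
    (c : Fin L) : columnEntries (π.trans T) c = columnEntries T c := by
  ext y
  simp only [mem_columnEntries]
  rw [Equiv.symm_trans_apply, ← hπ (π.symm _), Equiv.apply_symm_apply]

lemma swap_apply_fst {c : Fin L} (i j : Fin (μ c)) (x : Cell μ) :
    (Equiv.swap (⟨c, i⟩ : Cell μ) ⟨c, j⟩ x).1 = x.1 := by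
  rw [Equiv.swap_apply_def]
  split_ifs with hi hj
  · rw [hi]
  · rw [hj]
  · rfl

lemma compl_columnEntries_one {μ : Fin 2 → ℕ} (T : Tab μ r) :
    (columnEntries T 1 : Finset (Fin r))ᶜ = columnEntries T 0 := by
  ext y
  rw [mem_compl, mem_columnEntries, mem_columnEntries]
  omega

lemma sum_powersetCard_columnEntries {M : Type*} [AddCommMonoid M] (T : Tab μ r) (c : Fin L)
    (k : ℕ) (f : Finset (Fin r) → M) :
    ∑ A ∈ powersetCard k (columnEntries T c : Finset (Fin r)), f A =
      ∑ A ∈ powersetCard k univ, f (A.map (column T c)) := by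
  rw [coe_columnEntries, powersetCard_map, sum_map]
  rfl

lemma exists_columnEntries_eq (T₀ : Tab μ r) (c : Fin L) (Y : Set.powersetCard (Fin r) (μ c)) :
    ∃ T : Tab μ r, columnEntries T c = Y := by
  let e : (columnEntries T₀ c : Finset (Fin r)) ≃ (Y : Finset (Fin r)) :=
    Finset.equivOfCardEq ((Set.powersetCard.card_eq _).trans (Set.powersetCard.card_eq Y).symm)
  refine ⟨T₀.trans e.extendSubtype, Set.powersetCard.eq_iff_subset.mpr fun y hy => ?_⟩
  obtain ⟨j, -, rfl⟩ := mem_map.mp hy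
  exact e.extendSubtype_mem _ (mem_columnEntries.mpr (by simp))

lemma exists_columnEntries_eq_and_apply_eq (T₀ : Tab μ r) {c : Fin L}
    {Y : Set.powersetCard (Fin r) (μ c)} {y : Fin r} (hy : y ∈ (Y : Finset (Fin r)))
    (j : Fin (μ c)) : ∃ T : Tab μ r, columnEntries T c = Y ∧ T ⟨c, j⟩ = y := by
  obtain ⟨T, rfl⟩ := exists_columnEntries_eq T₀ c Y
  obtain ⟨i, -, rfl⟩ := mem_map.mp hy
  exact ⟨(Equiv.swap (⟨c, i⟩ : Cell μ) ⟨c, j⟩).trans T,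
    columnEntries_trans (swap_apply_fst i j) c, by simp⟩

/-- The tableau obtained from `T` by exchanging the cells `A i` of column `c₀` with the cells
`B i` of column `c₁`. -/
def exchange (T : Tab μ r) {k : ℕ} {c₀ c₁ : Fin L} (A : Fin k ↪ Fin (μ c₀))
    (B : Fin k ↪ Fin (μ c₁)) : Tab μ r :=
  (swaps (fun i => (⟨c₀, A i⟩ : Cell μ)) fun i => ⟨c₁, B i⟩).trans T

lemma columnEntries_exchange (T : Tab μ r) {k : ℕ} {c₀ c₁ : Fin L} (hc : c₀ ≠ c₁)
    (A : Fin k ↪ Fin (μ c₀)) (B : Fin k ↪ Fin (μ c₁)) :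
    (columnEntries (exchange T A B) c₁ : Finset (Fin r)) =
      (↑(columnEntries T c₁) \ (univ.map B).map (column T c₁)) ∪
        (univ.map A).map (column T c₀) := by
  have hBT : (univ.map B).map (column T c₁) ⊆ columnEntries T c₁ :=
    map_subset_map.mpr (subset_univ _)
  refine eq_of_subset_of_card_le (fun y hy => ?_) ((card_union_le _ _).trans ?_)
  · obtain ⟨j, -, rfl⟩ := mem_map.mp hy
    rw [column_apply, exchange, Equiv.trans_apply, mem_union, mem_sdiff]
    by_cases hj : ∃ i, B i = j
    · obtain ⟨i, rfl⟩ := hj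
      rw [swaps_apply_right (fun i j h => A.injective (by simpa using h))
        (fun i j h => B.injective (by simpa using h)) (fun i j h => hc (congrArg Sigma.fst h))]
      exact .inr (mem_map_of_mem (column T c₀) (mem_map_of_mem A (mem_univ i)))
    · rw [swaps_apply_of_ne (fun i h => hc (congrArg Sigma.fst h.symm))
        (fun i h => hj ⟨i, by simpa using h.symm⟩), ← column_apply]
      exact .inl ⟨mem_map_of_mem _ (mem_univ j), by simpa [mem_map'] using hj⟩
  · rw [card_sdiff_of_subset hBT, Set.powersetCard.card_eq, Set.powersetCard.card_eq]
    simpa using (Nat.sub_add_cancel (Fintype.card_le_of_embedding B)).le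

end Columns

section TabSign

/-- The sign of a tableau relative to a reference tableau `T₀`. -/
def tabSign (T₀ T : Tab μ r) : ℤˣ := Equiv.Perm.sign (T₀.symm.trans T)

lemma tabSign_trans (T₀ T : Tab μ r) (π : Equiv.Perm (Cell μ)) :
    tabSign T₀ (π.trans T) = Equiv.Perm.sign π * tabSign T₀ T := by
  have h : T₀.symm.trans (π.trans T) =
      (T₀.symm.trans T : Equiv.Perm (Fin r)) * ((T₀.symm.trans π).trans T₀) := by
    ext; simp
  rw [tabSign, h, Equiv.Perm.sign_mul, Equiv.Perm.sign_symm_trans_trans, mul_comm, tabSign]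

lemma tabSign_exchange (T₀ T : Tab μ r) {k : ℕ} {c₀ c₁ : Fin L} (hc : c₀ ≠ c₁)
    (A : Fin k ↪ Fin (μ c₀)) (B : Fin k ↪ Fin (μ c₁)) :
    tabSign T₀ (exchange T A B) = (-1) ^ k * tabSign T₀ T := by
  rw [exchange, tabSign_trans, sign_swaps fun i h => hc (congrArg Sigma.fst h)]

lemma tabSign_smul_smul {M : Type*} [MulAction ℤˣ M] (T₀ T : Tab μ r) (x : M) :
    tabSign T₀ T • tabSign T₀ T • x = x := by
  rw [smul_smul, Int.units_mul_self, one_smul]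

end TabSign

section Tabloid

variable (K : Type) [Field K]

lemma tabloid_swap_trans (T : Tab μ r) (c : Fin L) {i j : Fin (μ c)} (hij : i ≠ j) :
    tabloid K μ r ((Equiv.swap (⟨c, i⟩ : Cell μ) ⟨c, j⟩).trans T) = -tabloid K μ r T := by
  rw [eq_neg_iff_add_eq_zero, add_comm]
  exact (Submodule.Quotient.mk_eq_zero _).mpr (Submodule.subset_span ⟨T, c, i, j, hij, rfl⟩)

lemma mem_closure_columnSwaps {π : Equiv.Perm (Cell μ)} (hπ : ∀ x, (π x).1 = x.1) :
    π ∈ Subgroup.closure {τ : Equiv.Perm (Cell μ) | ∃ (c : Fin L) (i j : Fin (μ c)), i ≠ j ∧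
      τ = Equiv.swap ⟨c, i⟩ ⟨c, j⟩} := by
  have hne {c : Fin L} {i j : Fin (μ c)} (hij : i ≠ j) : (⟨c, i⟩ : Cell μ) ≠ ⟨c, j⟩ :=
    fun h => hij (by simpa using h)
  rw [mem_closure_isSwap (by rintro _ ⟨c, i, j, hij, rfl⟩; exact ⟨_, _, hne hij, rfl⟩)]
  refine ⟨Set.toFinite _, fun ⟨c, i⟩ => ?_⟩
  obtain ⟨j, hj⟩ : ∃ j, π ⟨c, i⟩ = ⟨c, j⟩ := by
    have h := hπ ⟨c, i⟩
    generalize π ⟨c, i⟩ = y at h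
    obtain ⟨_, j⟩ := y
    subst h
    exact ⟨j, rfl⟩
  rw [hj]
  obtain rfl | hij := eq_or_ne i j
  · exact MulAction.mem_orbit_self _
  · exact ⟨⟨Equiv.swap ⟨c, i⟩ ⟨c, j⟩, Subgroup.subset_closure ⟨c, i, j, hij, rfl⟩⟩,
      Equiv.swap_apply_left _ _⟩

lemma tabloid_trans (T : Tab μ r) {π : Equiv.Perm (Cell μ)} (hπ : ∀ x, (π x).1 = x.1) :
    tabloid K μ r (π.trans T) = Equiv.Perm.sign π • tabloid K μ r T := by
  have hclosure := mem_closure_columnSwaps hπ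
  clear hπ
  induction hclosure using Subgroup.closure_induction generalizing T with
  | mem π h =>
    obtain ⟨c, i, j, hij, rfl⟩ := h
    rw [tabloid_swap_trans K T c hij, Equiv.Perm.sign_swap fun h => hij (by simpa using h),
      Units.neg_smul, one_smul]
  | one => rw [Equiv.Perm.sign_one, one_smul]; rfl
  | mul π π' _ _ hπ hπ' =>
    have htrans : (π * π').trans T = π'.trans (π.trans T) := rfl
    rw [htrans, hπ', hπ, smul_smul, Equiv.Perm.sign_mul, mul_comm]
  | inv π _ hπ =>
    have hcancel : π.trans (π⁻¹.trans T) = T := by ext; simp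
    have h := hπ (π⁻¹.trans T)
    rw [hcancel] at h
    rw [h, smul_smul, ← Equiv.Perm.sign_mul, inv_mul_cancel, Equiv.Perm.sign_one, one_smul]

end Tabloid

section SecondColumn

open scoped Matrix

variable (K : Type) [Field K] {μ : Fin 2 → ℕ}

/-- The map from `M^λ`, for `λ` with two columns, to the functions on the subsets of size `λ'_2`
which sends a tabloid to the indicator function of its second column, up to the sign of the
tableau, which is what makes it well defined. -/
def secondColumnMap (T₀ : Tab μ r) :
    MLam K μ r →ₗ[K] (Set.powersetCard (Fin r) (μ 1) → K) :=
  (colRel K μ r).liftQ (Finsupp.linearCombination K fun T : Tab μ r =>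
      tabSign T₀ T • Johnson.starVec K (μ 1) (columnEntries T 1)) <| by
    refine Submodule.span_le.mpr ?_
    rintro _ ⟨T, c, i, j, hij, rfl⟩
    have hne : (⟨c, i⟩ : Cell μ) ≠ ⟨c, j⟩ := fun h => hij (by simpa using h)
    simp [tabSign_trans, Equiv.Perm.sign_swap hne, columnEntries_trans (swap_apply_fst i j)]

lemma secondColumnMap_tabloid (T₀ T : Tab μ r) : secondColumnMap K T₀ (tabloid K μ r T) =
    tabSign T₀ T • Johnson.starVec K (μ 1) (columnEntries T 1) := by
  rw [secondColumnMap, tabloid]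
  refine (Submodule.liftQ_apply _ _ _).trans ?_
  rw [Finsupp.linearCombination_single, one_smul]

variable {K}

lemma mlam_hom_ext {N : Type*} [AddCommGroup N] [Module K N] {L : ℕ} {μ : Fin L → ℕ}
    {f g : MLam K μ r →ₗ[K] N} (h : ∀ T, f (tabloid K μ r T) = g (tabloid K μ r T)) : f = g :=
  Submodule.linearMap_qext _ (Finsupp.lhom_ext' fun T => LinearMap.ext_ring (h T))

lemma tabSign_smul_tabloid_eq (T₀ : Tab μ r) {T T' : Tab μ r}
    (h : columnEntries T 1 = columnEntries T' 1) :
    tabSign T₀ T • tabloid K μ r T = tabSign T₀ T' • tabloid K μ r T' := by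
  obtain ⟨π, rfl⟩ : ∃ π : Equiv.Perm (Cell μ), T' = π.trans T :=
    ⟨T'.trans T.symm, by ext; simp⟩
  have hπ (x : Cell μ) : (π x).1 = x.1 := by
    have hx : (π x).1 = 1 ↔ x.1 = 1 := by
      rw [← T.symm_apply_apply (π x), ← mem_columnEntries, h, mem_columnEntries,
        Equiv.symm_trans_apply, Equiv.symm_apply_apply, Equiv.symm_apply_apply]
    omega
  rw [tabloid_trans K T hπ, tabSign_trans, mul_comm, ← smul_smul, smul_smul (Equiv.Perm.sign π),
    Int.units_mul_self, one_smul]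

lemma secondColumnMap_injective (T₀ : Tab μ r) : Function.Injective (secondColumnMap K T₀) := by
  choose T hT using exists_columnEntries_eq T₀ 1
  let g := (Pi.basisFun K _).constr K fun Y => tabSign T₀ (T Y) • tabloid K μ r (T Y)
  have hg : g ∘ₗ secondColumnMap K T₀ = LinearMap.id := mlam_hom_ext fun S => by
    rw [LinearMap.comp_apply, secondColumnMap_tabloid, Johnson.starVec_eq_single,
      ← Pi.basisFun_apply, LinearMap.map_smul_of_tower, Module.Basis.constr_basis,
      tabSign_smul_tabloid_eq T₀ (hT (columnEntries S 1)), tabSign_smul_smul, LinearMap.id_apply]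
  exact Function.LeftInverse.injective (g := g) (LinearMap.congr_fun hg)

lemma secondColumnMap_tabloid_exchange (T₀ T : Tab μ r) {k : ℕ} (A : Fin k ↪ Fin (μ 0))
    (B : Fin k ↪ Fin (μ 1)) :
    secondColumnMap K T₀ (tabloid K μ r (exchange T A B)) =
      tabSign T₀ T • (-1 : K) ^ k • Johnson.starVec K (μ 1)
        ((columnEntries T 1 \ (univ.map B).map (column T 1)) ∪
          (univ.map A).map (column T 0)) := by
  have hsign : ((-1 : ℤˣ) ^ k : ℤˣ) • (1 : K) = (-1) ^ k := by
    simp [Units.smul_def]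
  rw [secondColumnMap_tabloid, columnEntries_exchange T zero_ne_one, tabSign_exchange T₀ T
    zero_ne_one, mul_comm, ← smul_smul, ← hsign, smul_assoc, one_smul]

lemma secondColumnMap_sgrElt (T₀ T : Tab μ r) (k : ℕ) :
    secondColumnMap K T₀ (sgrElt K μ r T 0 one_lt_two k) = tabSign T₀ T •
      Johnson.sgrMatrix K (Fin r) (μ 1) k *ᵥ Johnson.starVec K (μ 1) (columnEntries T 1) := by
  have hexch (A : Finset (Fin (μ 0))) (hA : #A = k) (B : Finset (Fin (μ 1))) (hB : #B = k) :
      secondColumnMap K T₀ (tabloid K μ r ((exch2Perm μ 0 one_lt_two k A hA B hB).trans T)) =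
        tabSign T₀ T • (-1 : K) ^ k • Johnson.starVec K (μ 1)
          ((columnEntries T 1 \ B.map (column T 1)) ∪ A.map (column T 0)) := by
    have h := secondColumnMap_tabloid_exchange (K := K) T₀ T (A.orderEmbOfFin hA).toEmbedding
      (B.orderEmbOfFin hB).toEmbedding
    rwa [map_orderEmbOfFin_univ, map_orderEmbOfFin_univ] at h
  rw [Johnson.sgrMatrix_mulVec_starVec_eq_sum_exchange, compl_columnEntries_one, sum_comm,
    sum_powersetCard_columnEntries, sgrElt, map_sub, map_smul, secondColumnMap_tabloid, smul_sub,
    smul_comm, map_sum, smul_sum, smul_sum]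
  congr 1
  rw [← sum_attach (powersetCard k (univ : Finset (Fin (μ 0))))]
  refine sum_congr rfl fun A _ => ?_
  rw [sum_powersetCard_columnEntries, map_sum, smul_sum, smul_sum,
    ← sum_attach (powersetCard k (univ : Finset (Fin (μ 1))))]
  exact sum_congr rfl fun B _ => hexch _ _ _ _

lemma secondColumnMap_garnirElt (T₀ T : Tab μ r) {k : ℕ} (hk : k ≤ μ 1) :
    secondColumnMap K T₀ (garnirElt K μ r T 0 one_lt_two k hk) = tabSign T₀ T •
      (Johnson.starVec K (μ 1) (columnEntries T 1) - (-1 : K) ^ k • Johnson.intervalVec K (μ 1)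
        (columnEntries T 1 \ (univ.map (Fin.castLEEmb hk)).map (column T 1))
        ((univ.map (Fin.castLEEmb hk)).map (column T 1))) := by
  have hexch (A : Finset (Fin (μ 0))) (hA : #A = k) :
      secondColumnMap K T₀ (tabloid K μ r ((exchPerm μ 0 one_lt_two k hk A hA).trans T)) =
        tabSign T₀ T • (-1 : K) ^ k • Johnson.starVec K (μ 1)
          ((columnEntries T 1 \ (univ.map (Fin.castLEEmb hk)).map (column T 1)) ∪
            A.map (column T 0)) := by
    have h := secondColumnMap_tabloid_exchange (K := K) T₀ T (A.orderEmbOfFin hA).toEmbedding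
      (Fin.castLEEmb hk)
    rwa [map_orderEmbOfFin_univ] at h
  rw [← Johnson.sum_starVec_exchange _ (map_subset_map.mpr (subset_univ _)), card_map, card_map,
    card_univ, Fintype.card_fin, compl_columnEntries_one, sum_powersetCard_columnEntries,
    garnirElt, map_sub, secondColumnMap_tabloid, smul_sub, map_sum, smul_sum, smul_sum]
  congr 1
  rw [← sum_attach (powersetCard k (univ : Finset (Fin (μ 0))))]
  exact sum_congr rfl fun A _ => hexch _ _

end SecondColumn

section Submodules

variable {K : Type} [Field K] {μ : Fin 2 → ℕ}

lemma map_sgrSub (T₀ : Tab μ r) (k : ℕ) :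
    (sgrSub K μ r fun _ => k).map (secondColumnMap K T₀) =
      LinearMap.range (Johnson.sgrMatrix K (Fin r) (μ 1) k).mulVecLin := by
  rw [Johnson.range_mulVecLin_eq_span_starVec]
  refine le_antisymm ?_ (Submodule.span_le.mpr ?_)
  · rw [sgrSub, Submodule.map_span_le]
    rintro _ ⟨T, c, hc, rfl⟩
    obtain rfl : c = 0 := by omega
    rw [secondColumnMap_sgrElt]
    exact Submodule.smul_of_tower_mem _ _ (Submodule.subset_span ⟨columnEntries T 1, rfl⟩)
  · rintro _ ⟨Y, rfl⟩
    obtain ⟨T, rfl⟩ := exists_columnEntries_eq T₀ 1 Y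
    refine ⟨tabSign T₀ T • sgrElt K μ r T 0 one_lt_two k,
      Submodule.smul_of_tower_mem _ _ (Submodule.subset_span ⟨T, 0, one_lt_two, rfl⟩), ?_⟩
    rw [LinearMap.map_smul_of_tower, secondColumnMap_sgrElt, tabSign_smul_smul]

lemma secondColumnMap_garnirElt_mem_starSpan (T₀ T : Tab μ r) {k : ℕ} (hk : k ≤ μ 1) :
    secondColumnMap K T₀ (garnirElt K μ r T 0 one_lt_two k hk) ∈
      Johnson.starSpan K (Fin r) (μ 1) (μ 1) := by
  set Y := columnEntries T 1
  set B := (univ.map (Fin.castLEEmb hk)).map (column T 1) with hB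
  have hBY : B ⊆ Y := map_subset_map.mpr (subset_univ _)
  have hcardB : #B = k := by rw [hB, card_map, card_map, card_univ, Fintype.card_fin]
  have hmem := Johnson.intervalVec_sub_starVec_mem_starSpan (K := K) (b := μ 1) (↑Y \ B) B
  rw [sdiff_union_of_subset hBY, card_sdiff_add_card_eq_card hBY, Set.powersetCard.card_eq,
    hcardB] at hmem
  rw [secondColumnMap_garnirElt]
  refine Submodule.smul_of_tower_mem _ _ ?_
  have hsq : (-1 : K) ^ k * (-1) ^ k = 1 := by rw [← mul_pow]; simp
  convert Submodule.smul_mem _ (-(-1 : K) ^ k) hmem using 1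
  rw [smul_sub, smul_smul, neg_mul, hsq]
  module

lemma starVec_mem_map_garnirSub (T₀ : Tab μ r) {D : Finset (Fin r)} (hD : #D + 1 = μ 1) :
    Johnson.starVec K (μ 1) D ∈ (garnirSub K μ r).map (secondColumnMap K T₀) := by
  obtain ⟨y, -, hy⟩ : ∃ y ∈ (columnEntries T₀ 1 : Finset (Fin r)), y ∉ D :=
    exists_mem_notMem_of_card_lt_card (by rw [Set.powersetCard.card_eq]; omega)
  obtain ⟨T, hT, hTy⟩ := exists_columnEntries_eq_and_apply_eq T₀
    (Y := Set.powersetCard.ofCard (s := insert y D) (by rw [card_insert_of_notMem hy, hD]))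
    (mem_insert_self y D) ⟨0, by omega⟩
  have hb : 1 ≤ μ 1 := by omega
  refine ⟨tabSign T₀ T • garnirElt K μ r T 0 one_lt_two 1 hb, Submodule.smul_of_tower_mem _ _
    (Submodule.subset_span ⟨T, 0, one_lt_two, 1, hb, rfl⟩), ?_⟩
  have htop : (univ.map (Fin.castLEEmb hb)).map (column T 1) = {y} := by
    rw [← hTy, univ_unique, map_singleton, map_singleton]
    rfl
  rw [LinearMap.map_smul_of_tower, secondColumnMap_garnirElt, tabSign_smul_smul, htop, hT,
    Set.powersetCard.val_ofCard, sdiff_singleton_eq_erase, erase_insert hy,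
    Johnson.intervalVec_singleton]
  module

lemma map_garnirSub [CharZero K] (T₀ : Tab μ r) :
    (garnirSub K μ r).map (secondColumnMap K T₀) = Johnson.starSpan K (Fin r) (μ 1) (μ 1) := by
  refine le_antisymm ?_ ?_
  · rw [garnirSub, Submodule.map_span_le]
    rintro _ ⟨T, c, hc, k, hk, rfl⟩
    obtain rfl : c = 0 := by omega
    exact secondColumnMap_garnirElt_mem_starSpan T₀ T hk
  · rw [Johnson.starSpan_eq_span_starVec_card, Submodule.span_le]
    rintro _ ⟨D, hD, rfl⟩
    exact starVec_mem_map_garnirSub T₀ hD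

lemma nonempty_tab (hr : r = μ 0 + μ 1) : Nonempty (Tab μ r) :=
  ⟨Fintype.equivFinOfCardEq (by simp [hr])⟩

variable [CharZero K]

lemma sgrSub_le_garnirSub (hr : r = μ 0 + μ 1) (hba : μ 1 ≤ μ 0) {k : ℕ} (hk : k ≤ μ 1) :
    (sgrSub K μ r fun _ => k) ≤ garnirSub K μ r := by
  obtain ⟨T₀⟩ := nonempty_tab hr
  rw [← Submodule.map_le_map_iff_of_injective (secondColumnMap_injective (K := K) T₀),
    map_sgrSub, map_garnirSub]
  exact Johnson.range_sgrMatrix_le (by rw [Fintype.card_fin, hr]) hba hk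

lemma sgrSub_eq_garnirSub_iff (hr : r = μ 0 + μ 1) (hba : μ 1 ≤ μ 0) {k : ℕ} (hk : k ≤ μ 1) :
    (sgrSub K μ r fun _ => k) = garnirSub K μ r ↔
      ∀ j, 1 ≤ j → j ≤ μ 1 → Johnson.sgrEigenvalue K (μ 0) (μ 1) k j ≠ 0 := by
  obtain ⟨T₀⟩ := nonempty_tab hr
  rw [← (Submodule.map_injective_of_injective (secondColumnMap_injective (K := K) T₀)).eq_iff,
    map_sgrSub, map_garnirSub]
  exact Johnson.range_sgrMatrix_eq_starSpan_iff (by rw [Fintype.card_fin, hr]) hba hk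

end Submodules

section Equivariance

variable {K : Type} [Field K]

lemma IsTabAction.map_garnirSub_le {ρ : Equiv.Perm (Fin r) → (MLam K μ r →ₗ[K] MLam K μ r)}
    (hρ : IsTabAction K μ r ρ) (σ : Equiv.Perm (Fin r)) :
    (garnirSub K μ r).map (ρ σ) ≤ garnirSub K μ r := by
  rw [garnirSub, Submodule.map_span_le]
  rintro _ ⟨T, c, hc, k, hk, rfl⟩
  refine Submodule.subset_span ⟨T.trans σ, c, hc, k, hk, ?_⟩
  simp only [garnirElt, map_sub, map_sum, hρ σ, Equiv.trans_assoc]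

lemma isQuotIso_iff_eq {G M : Type} [AddCommGroup M] [Module K M] [FiniteDimensional K M]
    {N₁ N₂ : Submodule K M} (hle : N₁ ≤ N₂) {ρ : G → M →ₗ[K] M} (hρ : ∀ g, N₂.map (ρ g) ≤ N₂) :
    IsQuotIso K N₁ N₂ ρ ρ ↔ N₁ = N₂ := by
  constructor
  · rintro ⟨e, -⟩
    refine Submodule.eq_of_le_of_finrank_eq hle ?_
    have h₁ := N₁.finrank_quotient_add_finrank
    have h₂ := N₂.finrank_quotient_add_finrank
    have he := e.finrank_eq
    omega
  · rintro rfl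
    refine ⟨LinearEquiv.refl K _, fun g x y hxy => ?_⟩
    rw [LinearEquiv.refl_apply, Submodule.Quotient.eq] at hxy ⊢
    rw [← map_sub]
    exact hρ g (Submodule.mem_map_of_mem hxy)

end Equivariance

end Specht

namespace Specht

/-- Corollary 6.1 of the paper: let `a ≥ b ≥ k ≥ 1` and let `λ = (a,b)'`. Then
`M^λ / SGR^λ(k) ≅ S^λ` as `𝔖_{a+b}`-modules iff
`Σ_{t=1}^{j} (−1)^{t−1} C(b−t,b−k) C(j,t) C(a−b+j+t,t) ≠ 0` for all `j = 1, …, b`. -/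
theorem statement14 (K : Type) [Field K] [CharZero K] (a b k : ℕ)
    (hba : b ≤ a) (hk1 : 1 ≤ k) (hkb : k ≤ b) (r : ℕ) (hr : r = a + b)
    (ρ : Equiv.Perm (Fin r) → (MLam K ![a, b] r →ₗ[K] MLam K ![a, b] r))
    (hρ : IsTabAction K ![a, b] r ρ) :
    IsQuotIso K (sgrSub K ![a, b] r (fun _ => k)) (garnirSub K ![a, b] r) ρ ρ ↔
      ∀ j : ℕ, 1 ≤ j → j ≤ b →
        (∑ t ∈ Finset.Icc 1 j,
          (-1:K)^(t-1) * ((b-t).choose (b-k) : K) * (j.choose t : K) *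
            ((a-b+j+t).choose t : K)) ≠ 0 := by
  have hr' : r = ![a, b] 0 + ![a, b] 1 := hr
  rw [isQuotIso_iff_eq (sgrSub_le_garnirSub hr' hba hkb) hρ.map_garnirSub_le,
    sgrSub_eq_garnirSub_iff hr' hba hkb]
  rfl

end Specht
end
end
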